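/- Quantitative homogenization for a shear flow (Taylor diffusion estimate): let κ, a, ε > 0, set 𝐚^ε(x) := κ I₂ + aε² sin(2πx₂/ε) I₂^⊥ and 𝐚̄ := diag(κ + a²ε⁴/(2κ), κ). There is a universal constant C such that the following holds. Let θ be a smooth solution of ∂_t θ = div(𝐚̄∇θ) on [0,1]×T². For R > 0 and (t₀,x₀), define the ellipsoid E_R := { x ∈ ℝ² : κ x₁²/(κ + a²ε⁴/(2κ)) + x₂² ≤ R² } and the parabolic cylinder Q_R(t₀,x₀) := (t₀ − R²/κ, t₀] × (x₀ + E_R). Assume Q_{2R}(t₀,x₀) ⊆ [0,1]×T², and let θ_ε be a smooth solution of ∂_t θ_ε = div(𝐚^ε∇θ_ε) in Q_R(t₀,x₀) with θ_ε = θ on the parabolic boundary ∂_par Q_R (the set of boundary points of Q_R other than the interior of the final time slice). Then sup over t ∈ (t₀−R²/κ, t₀] of the volume-normalized norm ( ⨍_{x₀+E_R} |θ_ε(t,·) − θ(t,·)|² )^{1/2} is at most C (1 + aε²/κ) (ε/R) ( ⨍_{Q_{2R}} |θ|² )^{1/2}. In particular, when R ≫ ε(1 + aε²/κ), θ_ε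 is close to θ relative to the size of θ. -/

import Mathlib

open MeasureTheory Real Topology Filter

noncomputable section

/-- Spatial partial derivative `∂_i f` (via the Fréchet derivative). -/
def pd {d : ℕ} (f : (Fin d → ℝ) → ℝ) (i : Fin d) (x : Fin d → ℝ) : ℝ :=
  fderiv ℝ f x (Pi.single i 1)

/-- The unit box `[0,1]^d`, a fundamental domain for the torus `T^d = ℝ^d/ℤ^d`. -/
def box (d : ℕ) : Set (Fin d → ℝ) := Set.Icc 0 1

/-- `ℤ^d`-periodicity in the space variable (functions on the torus `T^d`). -/
def SpacePeriodic {d : ℕ} (f : (Fin d → ℝ) → ℝ) : Prop :=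
  ∀ (x : Fin d → ℝ) (k : Fin d → ℤ), f (x + fun i => (k i : ℝ)) = f x

/-- Squared length of the spatial gradient, `|∇f|²(x)`. -/
def gradSq {d : ℕ} (f : (Fin d → ℝ) → ℝ) (x : Fin d → ℝ) : ℝ :=
  ∑ i, (pd f i x) ^ 2

/-- Squared `L²(T^d)` norm. -/
def l2sq {d : ℕ} (f : (Fin d → ℝ) → ℝ) : ℝ := ∫ x in box d, (f x) ^ 2

/-- The dissipation `∫_0^t ‖∇θ(s,·)‖²_{L²(T^d)} ds`. -/
def dissipUpTo {d : ℕ} (θ : ℝ → (Fin d → ℝ) → ℝ) (t : ℝ) : ℝ :=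
  ∫ s in Set.Icc (0:ℝ) t, ∫ x in box d, gradSq (θ s) x

/-- The dissipation `∫_0^1 ∫_{T^d} |∇θ|² dx dt`. -/
def dissip {d : ℕ} (θ : ℝ → (Fin d → ℝ) → ℝ) : ℝ := dissipUpTo θ 1

/-- The 2×2 rotation matrix `I₂^⊥`. -/
def Iperp : Fin 2 → Fin 2 → ℝ := fun i j =>
  if i = 1 ∧ j = 0 then 1 else if i = 0 ∧ j = 1 then -1 else 0

/-- The oscillating matrix `𝐚^ε(x) = κI₂ + aε² sin(2πx₂/ε) I₂^⊥`. -/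
def aEps (κ a ε : ℝ) (x : Fin 2 → ℝ) (i j : Fin 2) : ℝ :=
  κ * (if i = j then 1 else 0)
    + a * ε ^ 2 * Real.sin (2 * π * x 1 / ε) * Iperp i j

/-- The ellipsoid `E_R` (centred at `c`) adapted to the homogenized matrix
`𝐚̄ = diag(κ + a²ε⁴/(2κ), κ)`. -/
def ellipsoid (κ a ε : ℝ) (c : Fin 2 → ℝ) (R : ℝ) : Set (Fin 2 → ℝ) :=
  {x | κ * (x 0 - c 0) ^ 2 / (κ + a ^ 2 * ε ^ 4 / (2 * κ))
        + (x 1 - c 1) ^ 2 ≤ R ^ 2}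

/-- The parabolic cylinder `Q_R(t₀,x₀) = (t₀ − R²/κ, t₀] × (x₀ + E_R)`. -/
def pCyl (κ a ε t₀ : ℝ) (x₀ : Fin 2 → ℝ) (R : ℝ) : Set (ℝ × (Fin 2 → ℝ)) :=
  Set.Ioc (t₀ - R ^ 2 / κ) t₀ ×ˢ ellipsoid κ a ε x₀ R

/-- The parabolic boundary `∂_par Q_R`: the boundary points of `Q_R` other than
the interior of the final time slice. -/
def pBdry (κ a ε t₀ : ℝ) (x₀ : Fin 2 → ℝ) (R : ℝ) : Set (ℝ × (Fin 2 → ℝ)) :=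
  (Set.Icc (t₀ - R ^ 2 / κ) t₀ ×ˢ ellipsoid κ a ε x₀ R)
    \ (Set.Ioc (t₀ - R ^ 2 / κ) t₀ ×ˢ interior (ellipsoid κ a ε x₀ R))


/-! ### Part 1: partial derivatives -/

theorem pd_contDiff {d : ℕ} {f : (Fin d → ℝ) → ℝ} (hf : ContDiff ℝ (⊤ : ℕ∞) f) (i : Fin d) :
    ContDiff ℝ (⊤ : ℕ∞) (pd f i) := by
  have h : ContDiff ℝ (⊤ : ℕ∞) (fderiv ℝ f) := hf.fderiv_right (by simp)
  exact h.clm_apply contDiff_const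

theorem smooth_diff {d : ℕ} {f : (Fin d → ℝ) → ℝ} (hf : ContDiff ℝ (⊤ : ℕ∞) f) :
    Differentiable ℝ f := hf.differentiable (by simp)

theorem pd_comm_at {d : ℕ} {f : (Fin d → ℝ) → ℝ} {x : Fin d → ℝ} (hf : ContDiffAt ℝ 2 f x)
    (i j : Fin d) : pd (pd f i) j x = pd (pd f j) i x := by
  have hs : IsSymmSndFDerivAt ℝ f x := hf.isSymmSndFDerivAt (by simp)
  have hd : DifferentiableAt ℝ (fderiv ℝ f) x :=
    (hf.fderiv_right (m := 1) (by norm_num)).differentiableAt (by simp)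
  have key : ∀ i j : Fin d, pd (pd f i) j x
      = fderiv ℝ (fderiv ℝ f) x (Pi.single j 1) (Pi.single i 1) := by
    intro i j
    unfold pd
    rw [fderiv_clm_apply hd (differentiableAt_const _)]
    simp
  rw [key, key]
  exact hs _ _

theorem pd_mul {d : ℕ} {f g : (Fin d → ℝ) → ℝ} {x : Fin d → ℝ} (hf : DifferentiableAt ℝ f x)
    (hg : DifferentiableAt ℝ g x) (i : Fin d) :
    pd (fun y => f y * g y) i x = pd f i x * g x + f x * pd g i x := by
  unfold pd
  rw [fderiv_fun_mul hf hg]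
  simp [mul_comm, add_comm]

theorem pd_add {d : ℕ} {f g : (Fin d → ℝ) → ℝ} {x : Fin d → ℝ} (hf : DifferentiableAt ℝ f x)
    (hg : DifferentiableAt ℝ g x) (i : Fin d) :
    pd (fun y => f y + g y) i x = pd f i x + pd g i x := by
  unfold pd
  rw [fderiv_fun_add hf hg]
  simp

theorem pd_const_mul {d : ℕ} {f : (Fin d → ℝ) → ℝ} {x : Fin d → ℝ} (hf : DifferentiableAt ℝ f x)
    (c : ℝ) (i : Fin d) :
    pd (fun y => c * f y) i x = c * pd f i x := by
  unfold pd
  rw [fderiv_const_mul hf]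
  simp

theorem slice_hasDerivAt {d : ℕ} {f : (Fin d → ℝ) → ℝ} {x : Fin d → ℝ} (i : Fin d) (τ : ℝ)
    (hf : DifferentiableAt ℝ f (Function.update x i τ)) :
    HasDerivAt (fun τ => f (Function.update x i τ)) (pd f i (Function.update x i τ)) τ :=
  hf.hasFDerivAt.comp_hasDerivAt τ (hasDerivAt_update x i τ)

theorem pd_eq_deriv {d : ℕ} {f : (Fin d → ℝ) → ℝ} {x : Fin d → ℝ} (i : Fin d)
    (hf : DifferentiableAt ℝ f x) :
    pd f i x = deriv (fun τ => f (Function.update x i τ)) (x i) := by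
  have := slice_hasDerivAt (x := x) i (x i) (by simpa using hf)
  simpa using this.deriv.symm

/-- Smooth solutions of the heat equation on `[-4,0] × ℝ²`. -/
def Sol (u : (Fin 3 → ℝ) → ℝ) : Prop :=
  ContDiff ℝ (⊤ : ℕ∞) u ∧ ∀ x : Fin 3 → ℝ, x 0 ∈ Set.Icc (-4 : ℝ) 0 →
    pd u 0 x = pd (pd u 1) 1 x + pd (pd u 2) 2 x

theorem pd_comm {d : ℕ} {f : (Fin d → ℝ) → ℝ} (hf : ContDiff ℝ (⊤ : ℕ∞) f)
    (i j : Fin d) : pd (pd f i) j = pd (pd f j) i :=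
  funext fun _ => pd_comm_at (((contDiff_infty.1 hf) 2).contDiffAt) i j

theorem Sol.pd {u : (Fin 3 → ℝ) → ℝ} (h : Sol u) (i : Fin 3) (hi : i ≠ 0) : Sol (pd u i) := by
  obtain ⟨hu, he⟩ := h
  refine ⟨pd_contDiff hu i, fun x hx => ?_⟩
  have s := fun k => pd_contDiff hu k
  have ss := fun k l => pd_contDiff (s k) l
  rw [pd_comm hu i 0, pd_comm hu i 1, pd_comm (s 1) i 1, pd_comm hu i 2, pd_comm (s 2) i 2,
    ← pd_add (smooth_diff (ss 1 1) x) (smooth_diff (ss 2 2) x), pd_eq_deriv i (smooth_diff (s 0) x),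
    pd_eq_deriv i ((smooth_diff (ss 1 1) x).fun_add (smooth_diff (ss 2 2) x))]
  congr 1
  funext τ
  apply he
  rwa [Function.update_of_ne hi.symm]

/-- The box `[-r,0] × [-r,r]²`. -/
def P (r : ℝ) : Set (Fin 3 → ℝ) := Set.Icc ![-r, -r, -r] ![0, r, r]

theorem mem_P {r : ℝ} {x : Fin 3 → ℝ} : x ∈ P r ↔
    (-r ≤ x 0 ∧ x 0 ≤ 0) ∧ (-r ≤ x 1 ∧ x 1 ≤ r) ∧ (-r ≤ x 2 ∧ x 2 ≤ r) := by
  simp [P, Set.mem_Icc, Pi.le_def, Fin.forall_fin_succ]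
  tauto

theorem P_compact (r : ℝ) : IsCompact (P r) := isCompact_Icc

theorem P_mono {r r' : ℝ} (h : r ≤ r') : P r ⊆ P r' := by
  intro x hx
  rw [mem_P] at *
  refine ⟨⟨?_, ?_⟩, ⟨?_, ?_⟩, ?_, ?_⟩ <;> linarith [hx.1.1, hx.1.2, hx.2.1.1, hx.2.1.2, hx.2.2.1, hx.2.2.2]

theorem intP {f : (Fin 3 → ℝ) → ℝ} (hf : Continuous f) (r : ℝ) : IntegrableOn f (P r) :=
  hf.continuousOn.integrableOn_compact (P_compact r)

theorem energy_identity {r : ℝ} (hr : 0 < r) (hr4 : r ≤ 4) {ζ u : (Fin 3 → ℝ) → ℝ}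
    (hζ : ContDiff ℝ (⊤ : ℕ∞) ζ)
    (h0 : ∀ x, x 0 = -r → ζ x = 0) (h1 : ∀ x, x 1 = r → ζ x = 0) (h1' : ∀ x, x 1 = -r → ζ x = 0)
    (h2 : ∀ x, x 2 = r → ζ x = 0) (h2' : ∀ x, x 2 = -r → ζ x = 0) (hu : Sol u) :
    0 ≤ ∫ x in P r, (2 * ζ x * pd ζ 0 x * u x ^ 2
      - 4 * ζ x * u x * (pd ζ 1 x * pd u 1 x + pd ζ 2 x * pd u 2 x)
      - 2 * ζ x ^ 2 * (pd u 1 x ^ 2 + pd u 2 x ^ 2)) := by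
  have su := pd_contDiff hu.1
  have du := smooth_diff hu.1
  have dsu := fun i => smooth_diff (su i)
  have dζ := smooth_diff hζ
  let f : Fin 3 → (Fin 3 → ℝ) → ℝ := ![fun x => (ζ x * ζ x) * (u x * u x),
    fun x => (-2) * ((ζ x * ζ x) * (u x * pd u 1 x)), fun x => (-2) * ((ζ x * ζ x) * (u x * pd u 2 x))]
  have hf : ∀ i, ContDiff ℝ (⊤ : ℕ∞) (f i) := by
    intro i
    fin_cases i
    · exact (hζ.mul hζ).mul (hu.1.mul hu.1)
    · exact contDiff_const.mul ((hζ.mul hζ).mul (hu.1.mul (su 1)))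
    · exact contDiff_const.mul ((hζ.mul hζ).mul (hu.1.mul (su 2)))
  have hle : (![-r, -r, -r] : Fin 3 → ℝ) ≤ ![0, r, r] := by
    intro i; fin_cases i <;> simp <;> linarith
  have hcont : Continuous (fun x => ∑ i, fderiv ℝ (f i) x (Pi.single i 1)) := by
    refine continuous_finsetSum _ fun i _ => ?_
    exact (pd_contDiff (hf i) i).continuous
  have key := integral_divergence_of_hasFDerivAt_off_countable' (![-r, -r, -r] : Fin 3 → ℝ)
    ![0, r, r] hle f (fun i x => fderiv ℝ (f i) x) ∅ Set.countable_empty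
    (fun i => (hf i).continuous.continuousOn)
    (fun x _ i => (smooth_diff (hf i) x).hasFDerivAt) (intP hcont r)
  have e : ∀ x ∈ P r, (2 * ζ x * pd ζ 0 x * u x ^ 2
      - 4 * ζ x * u x * (pd ζ 1 x * pd u 1 x + pd ζ 2 x * pd u 2 x)
      - 2 * ζ x ^ 2 * (pd u 1 x ^ 2 + pd u 2 x ^ 2)) = ∑ i, fderiv ℝ (f i) x (Pi.single i 1) := by
    intro x hx
    rw [mem_P] at hx
    have hE := hu.2 x ⟨by linarith [hx.1.1], hx.1.2⟩
    have a0 : fderiv ℝ (f 0) x (Pi.single 0 1) = _ :=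
      (pd_mul ((dζ x).mul (dζ x)) ((du x).mul (du x)) 0)
    have a1 : fderiv ℝ (f 1) x (Pi.single 1 1) = _ :=
      (pd_const_mul (((dζ x).mul (dζ x)).mul ((du x).mul (dsu 1 x))) (-2) 1)
    have a2 : fderiv ℝ (f 2) x (Pi.single 2 1) = _ :=
      (pd_const_mul (((dζ x).mul (dζ x)).mul ((du x).mul (dsu 2 x))) (-2) 2)
    have b : ∀ i j, pd (fun y => (ζ y * ζ y) * (u y * pd u j y)) i x = _ := fun i j =>
      pd_mul ((dζ x).mul (dζ x)) ((du x).mul (dsu j x)) i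
    rw [Fin.sum_univ_three, a0, a1, a2]
    simp only [Pi.mul_def]
    rw [b, b]
    simp only [Pi.mul_def]
    rw [pd_mul (dζ x) (dζ x), pd_mul (dζ x) (dζ x), pd_mul (dζ x) (dζ x),
      pd_mul (du x) (du x), pd_mul (du x) (dsu 1 x), pd_mul (du x) (dsu 2 x), hE]
    ring
  rw [setIntegral_congr_fun (P_compact r).measurableSet e]
  unfold P
  rw [key, Fin.sum_univ_three]
  have z1 : ∀ y : Fin 2 → ℝ, f 0 ((0 : Fin 3).insertNth (-r) y) = 0 := by
    intro y; simp only [f, Matrix.cons_val_zero]; rw [h0 _ (by simp)]; ring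
  have z2 : ∀ y : Fin 2 → ℝ, f 1 ((1 : Fin 3).insertNth (-r) y) = 0 := by
    intro y; simp only [f, Matrix.cons_val_one, Matrix.cons_val_zero]; rw [h1' _ (by simp)]; ring
  have z3 : ∀ y : Fin 2 → ℝ, f 1 ((1 : Fin 3).insertNth r y) = 0 := by
    intro y; simp only [f, Matrix.cons_val_one, Matrix.cons_val_zero]; rw [h1 _ (by simp)]; ring
  have z4 : ∀ y : Fin 2 → ℝ, f 2 ((2 : Fin 3).insertNth (-r) y) = 0 := by
    intro y; simp only [f, Matrix.cons_val]; rw [h2' _ (by simp)]; ring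
  have z5 : ∀ y : Fin 2 → ℝ, f 2 ((2 : Fin 3).insertNth r y) = 0 := by
    intro y; simp only [f, Matrix.cons_val]; rw [h2 _ (by simp)]; ring
  simp only [Matrix.cons_val_zero, Matrix.cons_val_one, Matrix.cons_val, z1, z2, z3, z4, z5,
    integral_zero, sub_zero, add_zero]
  apply integral_nonneg
  intro y
  simp only [f, Matrix.cons_val_zero, Pi.zero_apply]
  exact mul_nonneg (mul_self_nonneg _) (mul_self_nonneg _)

theorem grad_est {r r' : ℝ} (hr : 0 < r) (hrr : r < r') (hr4 : r' ≤ 4) :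
    ∃ C : ℝ, 0 < C ∧ ∀ u, Sol u → ∀ i : Fin 3, i ≠ 0 →
      ∫ x in P r, (pd u i x) ^ 2 ≤ C * ∫ x in P r', (u x) ^ 2 := by
  let ζ : (Fin 3 → ℝ) → ℝ := fun x => (x 0 + r') * (r' ^ 2 - x 1 ^ 2) * (r' ^ 2 - x 2 ^ 2)
  have hζ : ContDiff ℝ (⊤ : ℕ∞) ζ := by
    have hp : ∀ i : Fin 3, ContDiff ℝ (⊤ : ℕ∞) (fun x : Fin 3 → ℝ => x i) :=
      fun i => contDiff_apply ℝ ℝ i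
    exact ((((hp 0).add contDiff_const)).mul (contDiff_const.sub ((hp 1).pow 2))).mul
      (contDiff_const.sub ((hp 2).pow 2))
  let A : (Fin 3 → ℝ) → ℝ := fun x =>
    2 * ζ x * pd ζ 0 x + 4 * (pd ζ 1 x ^ 2 + pd ζ 2 x ^ 2)
  have cζ := hζ.continuous
  have cpζ := fun i => (pd_contDiff hζ i).continuous
  have hA : Continuous A := by
    have := cpζ 0; have := cpζ 1; have := cpζ 2
    fun_prop
  obtain ⟨B, hB⟩ := (P_compact r').exists_bound_of_continuousOn hA.continuousOn
  set c : ℝ := ((r' - r) * (r' ^ 2 - r ^ 2) * (r' ^ 2 - r ^ 2)) ^ 2 with hc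
  have hlow : 0 < r' ^ 2 - r ^ 2 := by nlinarith
  have hlow' : 0 < r' - r := by linarith
  have hcpos : 0 < c := by positivity
  have hζc : ∀ x ∈ P r, c ≤ ζ x ^ 2 := by
    intro x hx
    rw [mem_P] at hx
    obtain ⟨⟨a1, a2⟩, ⟨b1, b2⟩, c1, c2⟩ := hx
    have e0 : r' - r ≤ x 0 + r' := by linarith
    have e1 : r' ^ 2 - r ^ 2 ≤ r' ^ 2 - x 1 ^ 2 := by nlinarith
    have e2 : r' ^ 2 - r ^ 2 ≤ r' ^ 2 - x 2 ^ 2 := by nlinarith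
    have := hlow.trans_le e1
    have := hlow'.trans_le e0
    simp only [hc, ζ]
    gcongr
  have hBA : ∀ x ∈ P r', A x ≤ |B| + 1 := fun x hx => by
    have h1 := (le_abs_self _).trans (hB x hx); have := le_abs_self B; linarith
  refine ⟨(|B| + 1) / c, by positivity, fun u hu i hi => ?_⟩
  have cu := hu.1.continuous
  have cpu := fun i => (pd_contDiff hu.1 i).continuous
  have := cpζ 0; have := cpζ 1; have := cpζ 2
  have := cpu 0; have := cpu 1; have := cpu 2; have := cpu i
  have hid := energy_identity (by linarith) hr4 hζ (u := u) (by intro x hx; simp [ζ, hx])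
    (by intro x hx; simp [ζ, hx]) (by intro x hx; simp [ζ, hx]) (by intro x hx; simp [ζ, hx])
    (by intro x hx; simp [ζ, hx]) hu
  have h2 : ∫ x in P r', (2 * ζ x * pd ζ 0 x * u x ^ 2
      - 4 * ζ x * u x * (pd ζ 1 x * pd u 1 x + pd ζ 2 x * pd u 2 x)
      - 2 * ζ x ^ 2 * (pd u 1 x ^ 2 + pd u 2 x ^ 2))
      ≤ ∫ x in P r', ((|B| + 1) * u x ^ 2 - ζ x ^ 2 * (pd u i x) ^ 2) := by
    refine setIntegral_mono_on (intP (by fun_prop) _) (intP (by fun_prop) _)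
      (P_compact _).measurableSet ?_
    intro x hx
    have hA' : A x * u x ^ 2 ≤ (|B| + 1) * u x ^ 2 :=
      mul_le_mul_of_nonneg_right (hBA x hx) (sq_nonneg _)
    have q1 := sq_nonneg (ζ x * pd u 1 x + 2 * u x * pd ζ 1 x)
    have q2 := sq_nonneg (ζ x * pd u 2 x + 2 * u x * pd ζ 2 x)
    have hi' : ζ x ^ 2 * (pd u i x) ^ 2 ≤ ζ x ^ 2 * (pd u 1 x ^ 2 + pd u 2 x ^ 2) := by
      gcongr
      fin_cases i
      · exact absurd rfl hi
      · simpa using sq_nonneg _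
      · simpa using sq_nonneg _
    simp only [A] at hA'
    nlinarith
  replace h2 := hid.trans h2
  rw [integral_sub (intP (by fun_prop) _) (intP (by fun_prop) _), integral_const_mul] at h2
  have h3 : c * ∫ x in P r, (pd u i x) ^ 2 ≤ ∫ x in P r', ζ x ^ 2 * (pd u i x) ^ 2 := by
    rw [← integral_const_mul]
    calc ∫ x in P r, c * (pd u i x) ^ 2 ≤ ∫ x in P r, ζ x ^ 2 * (pd u i x) ^ 2 := by
          refine setIntegral_mono_on (intP (by fun_prop) _) (intP (by fun_prop) _)
            (P_compact _).measurableSet fun x hx => ?_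
          exact mul_le_mul_of_nonneg_right (hζc x hx) (sq_nonneg _)
      _ ≤ _ := by
          refine setIntegral_mono_set (intP (by fun_prop) _) ?_ (P_mono hrr.le).eventuallyLE
          exact Eventually.of_forall fun x => by positivity
  rw [div_mul_eq_mul_div, le_div_iff₀ hcpos]
  linarith

/-! ### Part 2: iteration and Sobolev -/

def DL : List (Fin 3) → ((Fin 3 → ℝ) → ℝ) → ((Fin 3 → ℝ) → ℝ)
  | [], u => u
  | i :: l, u => DL l (pd u i)

theorem DL_append (l : List (Fin 3)) (i : Fin 3) (u : (Fin 3 → ℝ) → ℝ) :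
    DL (l ++ [i]) u = pd (DL l u) i := by
  induction l generalizing u with
  | nil => rfl
  | cons j l ih => exact ih (pd u j)

theorem Sol.DL {l : List (Fin 3)} (hl : ∀ i ∈ l, i ≠ 0) {u : (Fin 3 → ℝ) → ℝ} (h : Sol u) :
    Sol (DL l u) := by
  induction l generalizing u with
  | nil => exact h
  | cons j l ih =>
    exact ih (fun i hi => hl i (List.mem_cons_of_mem _ hi)) (h.pd j (hl j (List.mem_cons_self)))

theorem iter_est (l : List (Fin 3)) (hl : ∀ i ∈ l, i ≠ 0) {r r' : ℝ} (hr : 0 < r) (hrr : r < r')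
    (hr4 : r' ≤ 4) :
    ∃ C : ℝ, 0 < C ∧ ∀ u, Sol u →
      ∫ x in P r, (DL l u x) ^ 2 ≤ C * ∫ x in P r', (u x) ^ 2 := by
  induction l generalizing r r' with
  | nil =>
    refine ⟨1, one_pos, fun u hu => ?_⟩
    rw [one_mul]
    have := hu.1.continuous
    exact setIntegral_mono_set (intP (f := fun x => u x ^ 2) (by fun_prop) _) (Eventually.of_forall fun x => by positivity)
      (P_mono hrr.le).eventuallyLE
  | cons j l ih =>
    obtain ⟨C, hC, h⟩ := ih (fun i hi => hl i (List.mem_cons_of_mem _ hi)) (r := r)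
      (r' := (r + r') / 2) hr (by linarith) (by linarith)
    obtain ⟨C', hC', h'⟩ := grad_est (r := (r + r') / 2) (r' := r') (by linarith) (by linarith) hr4
    have hj := hl j (List.mem_cons_self)
    refine ⟨C * C', by positivity, fun u hu => ?_⟩
    refine (h _ (hu.pd j hj)).trans ?_
    rw [mul_assoc]
    exact mul_le_mul_of_nonneg_left (h' u hu j hj) hC.le

theorem iter_est' (l : List (Fin 3)) (hl : ∀ i ∈ l, i ≠ 0) {r r' : ℝ} (hr : 0 < r) (hrr : r < r')
    (hr4 : r' ≤ 4) :
    ∃ C : ℝ, 0 < C ∧ ∀ u, Sol u →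
      ∫ x in P r, (DL l u x) ^ 2 ≤ C * ∫ x in P r', (u x) ^ 2 ∧
      ∫ x in P r, (pd (DL l u) 0 x) ^ 2 ≤ C * ∫ x in P r', (u x) ^ 2 := by
  have hl' : ∀ i, i ≠ 0 → ∀ j ∈ (l ++ [i]) ++ [i], j ≠ 0 := by
    intro i hi j hj
    simp only [List.append_assoc, List.mem_append, List.mem_cons, List.not_mem_nil, or_false] at hj
    rcases hj with h | h | h
    · exact hl j h
    · rw [h]; exact hi
    · rw [h]; exact hi
  obtain ⟨C0, hC0, h0⟩ := iter_est l hl hr hrr hr4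
  obtain ⟨C1, hC1, h1⟩ := iter_est _ (hl' 1 (by decide)) hr hrr hr4
  obtain ⟨C2, hC2, h2⟩ := iter_est _ (hl' 2 (by decide)) hr hrr hr4
  refine ⟨C0 + 2 * C1 + 2 * C2, by positivity, fun u hu => ?_⟩
  have hI : 0 ≤ ∫ x in P r', (u x) ^ 2 := integral_nonneg fun x => sq_nonneg _
  have s := hu.DL hl
  have s1 := pd_contDiff s.1
  have s2 := fun i => (pd_contDiff (s1 i) i).continuous
  have c0 := (s1 0).continuous
  have c1 := s2 1
  have c2 := s2 2
  have g0 := h0 u hu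
  have g1 := h1 u hu
  have g2 := h2 u hu
  rw [DL_append, DL_append] at g1 g2
  constructor
  · nlinarith [mul_nonneg hC1.le hI, mul_nonneg hC2.le hI]
  · have : ∫ x in P r, (pd (DL l u) 0 x) ^ 2 ≤
        ∫ x in P r, (2 * (pd (pd (DL l u) 1) 1 x) ^ 2 + 2 * (pd (pd (DL l u) 2) 2 x) ^ 2) := by
      refine setIntegral_mono_on (intP (by fun_prop) _) (intP (by fun_prop) _)
        (P_compact _).measurableSet fun x hx => ?_
      rw [mem_P] at hx
      rw [s.2 x ⟨by linarith [hx.1.1], hx.1.2⟩]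
      nlinarith [sq_nonneg (pd (pd (DL l u) 1) 1 x - pd (pd (DL l u) 2) 2 x)]
    rw [integral_add (intP (by fun_prop) _) (intP (by fun_prop) _), integral_const_mul,
      integral_const_mul] at this
    nlinarith [mul_nonneg hC0.le hI]

theorem sob1 {a b x : ℝ} (hab : a < b) (hx : x ∈ Set.Icc a b) {g g' : ℝ → ℝ}
    (hg : ∀ t, HasDerivAt g (g' t) t) (hg' : Continuous g') :
    g x ^ 2 ≤ (1 / (b - a) + 1) * ∫ t in Set.Icc a b, (g t ^ 2 + g' t ^ 2) := by
  have cg : Continuous g := continuous_iff_continuousAt.2 fun t => (hg t).continuousAt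
  have hint : ∀ {f : ℝ → ℝ}, Continuous f → IntegrableOn f (Set.Icc a b) := fun hf =>
    hf.continuousOn.integrableOn_compact isCompact_Icc
  set I := ∫ t in Set.Icc a b, (g t ^ 2 + g' t ^ 2) with hI
  have key : ∀ y ∈ Set.Icc a b, g x ^ 2 ≤ g y ^ 2 + I := by
    intro y hy
    have h2 : ∫ t in y..x, 2 * g t * g' t = g x ^ 2 - g y ^ 2 := by
      apply intervalIntegral.integral_eq_sub_of_hasDerivAt (f := fun x => g x ^ 2)
      · intro t _
        simpa using (hg t).fun_pow 2
      · exact (by fun_prop : Continuous fun t => 2 * g t * g' t).intervalIntegrable _ _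
    have h3 : ‖∫ t in y..x, 2 * g t * g' t‖ ≤ I := by
      refine intervalIntegral.norm_integral_le_integral_norm_uIoc.trans ?_
      calc ∫ t in Set.uIoc y x, ‖2 * g t * g' t‖ ≤ ∫ t in Set.uIoc y x, (g t ^ 2 + g' t ^ 2) := by
            have hc : ∀ {f : ℝ → ℝ}, Continuous f → IntegrableOn f (Set.uIoc y x) := fun hf =>
              (hf.continuousOn.integrableOn_compact isCompact_uIcc).mono_set Set.uIoc_subset_uIcc
            refine setIntegral_mono_on (hc (by fun_prop)) (hc (by fun_prop)) measurableSet_uIoc ?_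
            intro t _
            rw [Real.norm_eq_abs, abs_le]
            constructor <;> nlinarith [sq_nonneg (g t + g' t), sq_nonneg (g t - g' t)]
        _ ≤ I := by
            refine setIntegral_mono_set (hint (by fun_prop))
              (Eventually.of_forall fun t => by positivity) ?_
            exact (Set.uIoc_subset_uIcc.trans (Set.uIcc_subset_Icc hy hx)).eventuallyLE
    have := le_abs_self (∫ t in y..x, 2 * g t * g' t)
    rw [Real.norm_eq_abs] at h3
    linarith
  have h4 : ∫ y in Set.Icc a b, g x ^ 2 ≤ ∫ y in Set.Icc a b, (g y ^ 2 + I) :=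
    setIntegral_mono_on (hint (by fun_prop)) (hint (by fun_prop)) measurableSet_Icc key
  have h5 : ∫ y in Set.Icc a b, g y ^ 2 ≤ I :=
    setIntegral_mono_on (hint (by fun_prop)) (hint (by fun_prop)) measurableSet_Icc
      fun t _ => by nlinarith [sq_nonneg (g' t)]
  rw [integral_add (hint (by fun_prop)) (hint (by fun_prop))] at h4
  simp only [integral_const, MeasurableSet.univ, measureReal_restrict_apply, Set.univ_inter,
    smul_eq_mul, Real.volume_real_Icc_of_le hab.le] at h4
  have hba : 0 < b - a := by linarith
  have : g x ^ 2 ≤ ((b - a) * I + I) / (b - a) := by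
    rw [le_div_iff₀ hba]; linarith
  refine this.trans (le_of_eq ?_)
  field_simp
  ring

def NS (l : List ((Fin 3 → ℝ) → ℝ)) (x : Fin 3 → ℝ) : ENNReal :=
  (l.map fun G => ENNReal.ofReal (G x ^ 2)).sum

theorem NS_measurable {l : List ((Fin 3 → ℝ) → ℝ)} (hl : ∀ G ∈ l, Continuous G) :
    Measurable (NS l) := by
  induction l with
  | nil =>
    have : NS [] = fun _ => 0 := by funext x; simp [NS]
    rw [this]; exact measurable_const
  | cons G l ih =>
    have : NS (G :: l) = fun x => ENNReal.ofReal (G x ^ 2) + NS l x := by funext x; simp [NS]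
    rw [this]
    have := hl G (List.mem_cons_self)
    refine Measurable.add ?_ (ih fun G hG => hl G (List.mem_cons_of_mem _ hG))
    exact ENNReal.measurable_ofReal.comp (this.pow 2).measurable

def dup (i : Fin 3) (l : List ((Fin 3 → ℝ) → ℝ)) : List ((Fin 3 → ℝ) → ℝ) :=
  l.flatMap fun G => [G, pd G i]

theorem dup_smooth {i : Fin 3} {l : List ((Fin 3 → ℝ) → ℝ)}
    (hl : ∀ G ∈ l, ContDiff ℝ (⊤ : ℕ∞) G) : ∀ G ∈ dup i l, ContDiff ℝ (⊤ : ℕ∞) G := by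
  intro G hG
  simp only [dup, List.mem_flatMap, List.mem_cons, List.not_mem_nil, or_false] at hG
  obtain ⟨H, hH, rfl | rfl⟩ := hG
  · exact hl _ hH
  · exact pd_contDiff (hl _ hH) i

theorem NS_step {a b : ℝ} (hab : a < b) (i : Fin 3) {x : Fin 3 → ℝ} (hx : x i ∈ Set.Icc a b)
    {l : List ((Fin 3 → ℝ) → ℝ)} (hl : ∀ G ∈ l, ContDiff ℝ (⊤ : ℕ∞) G) :
    NS l x ≤ ENNReal.ofReal (1 / (b - a) + 1) *
      ∫⁻ t in Set.Icc a b, NS (dup i l) (Function.update x i t) := by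
  have hK : 0 ≤ 1 / (b - a) + 1 := by have : 0 < b - a := by linarith
                                      positivity
  induction l with
  | nil => simp [NS]
  | cons G l ih =>
    have hG := hl G (List.mem_cons_self)
    have cG := hG.continuous
    have cG' := (pd_contDiff hG i).continuous
    have hup : Continuous (fun t : ℝ => Function.update x i t) := by fun_prop
    have e : ∀ t, NS (dup i (G :: l)) (Function.update x i t) =
        ENNReal.ofReal (G (Function.update x i t) ^ 2 + pd G i (Function.update x i t) ^ 2)
          + NS (dup i l) (Function.update x i t) := by
      intro t
      rw [ENNReal.ofReal_add (sq_nonneg _) (sq_nonneg _)]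
      simp [NS, dup, add_assoc]
    simp_rw [e]
    rw [lintegral_add_left (by fun_prop), mul_add]
    have e2 : NS (G :: l) x = ENNReal.ofReal (G x ^ 2) + NS l x := by simp [NS]
    rw [e2]
    refine add_le_add ?_ (ih fun G hG => hl G (List.mem_cons_of_mem _ hG))
    rw [← ofReal_integral_eq_lintegral_ofReal, ← ENNReal.ofReal_mul hK]
    · apply ENNReal.ofReal_le_ofReal
      have := sob1 hab hx (g := fun t => G (Function.update x i t))
        (fun t => slice_hasDerivAt i t (smooth_diff hG _)) (by fun_prop)
      simpa using this
    · exact (by fun_prop : Continuous _).continuousOn.integrableOn_compact isCompact_Icc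
    · exact Eventually.of_forall fun t => by positivity

theorem NS_int {r B : ℝ} {l : List ((Fin 3 → ℝ) → ℝ)} (hl : ∀ G ∈ l, Continuous G)
    (hB : ∀ G ∈ l, ∫ x in P r, G x ^ 2 ≤ B) :
    ∫⁻ x in P r, NS l x ≤ l.length * ENNReal.ofReal B := by
  induction l with
  | nil => simp [NS]
  | cons G l ih =>
    have cG := hl G (List.mem_cons_self)
    have e2 : ∀ x, NS (G :: l) x = ENNReal.ofReal (G x ^ 2) + NS l x := by simp [NS]
    simp_rw [e2]
    rw [lintegral_add_left (by fun_prop), ← ofReal_integral_eq_lintegral_ofReal]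
    · have h1 := ENNReal.ofReal_le_ofReal (hB G (List.mem_cons_self))
      have h2 := ih (fun G hG => hl G (List.mem_cons_of_mem _ hG))
        (fun G hG => hB G (List.mem_cons_of_mem _ hG))
      refine (add_le_add h1 h2).trans (le_of_eq ?_)
      push_cast [List.length_cons]
      ring
    · exact intP (by fun_prop) _
    · exact Eventually.of_forall fun t => by positivity

theorem NS_sob {r : ℝ} (hr : 0 < r) {u : (Fin 3 → ℝ) → ℝ} (hu : ContDiff ℝ (⊤ : ℕ∞) u)
    {x : Fin 3 → ℝ} (hx : x ∈ P r) :
    ENNReal.ofReal (u x ^ 2) ≤ ENNReal.ofReal ((1 / r + 1) * (1 / (2 * r) + 1) ^ 2) *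
      ∫⁻ x in P r, NS (dup 0 (dup 2 (dup 1 [u]))) x := by
  have hx' := mem_P.1 hx
  have l0 : ∀ G ∈ [u], ContDiff ℝ (⊤ : ℕ∞) G := by simpa using hu
  have l1 := dup_smooth (i := 1) l0
  have l2 := dup_smooth (i := 2) l1
  have l3 := dup_smooth (i := 0) l2
  have s1 := NS_step (a := -r) (b := r) (by linarith) 1 (x := x) hx'.2.1 l0
  have s2 := fun t => NS_step (a := -r) (b := r) (by linarith) 2 (x := Function.update x 1 t)
    (by simpa using hx'.2.2) l1
  have s3 := fun t t' => NS_step (a := -r) (b := 0) (by linarith) 0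
    (x := Function.update (Function.update x 1 t) 2 t') (by simpa using hx'.1) l2
  rw [show r - -r = 2 * r by ring] at s1 s2
  rw [show 0 - -r = r by ring] at s3
  let μ : Fin 3 → Measure ℝ := ![volume.restrict (Set.Icc (-r) 0), volume.restrict (Set.Icc (-r) r),
    volume.restrict (Set.Icc (-r) r)]
  have hμ : Measure.pi μ = volume.restrict (P r) := by
    have : P r = Set.pi Set.univ (fun i => Set.Icc ((![-r, -r, -r] : Fin 3 → ℝ) i)
      ((![0, r, r] : Fin 3 → ℝ) i)) := by rw [Set.pi_univ_Icc]; rfl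
    rw [this, volume_pi, Measure.restrict_pi_pi]
    congr 1
    funext i
    fin_cases i <;> rfl
  have hsf : ∀ i, SigmaFinite (μ i) := by
    intro i; fin_cases i <;> (simp [μ]; infer_instance)
  have hF := NS_measurable (fun G hG => (l3 G hG).continuous)
  set F := NS (dup 0 (dup 2 (dup 1 [u]))) with hFdef
  have hlm : ∫⁻ x in P r, F x = ∫⁻ t in Set.Icc (-r) r, ∫⁻ t' in Set.Icc (-r) r,
      ∫⁻ t'' in Set.Icc (-r) 0,
        F (Function.update (Function.update (Function.update x 1 t) 2 t') 0 t'') := by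
    rw [← hμ, lintegral_eq_lmarginal_univ x]
    have : (Finset.univ : Finset (Fin 3)) = insert 1 (insert 2 {0}) := by decide
    rw [this, lmarginal_insert _ hF (by decide)]
    refine lintegral_congr fun t => ?_
    rw [lmarginal_insert _ hF (by decide)]
    refine lintegral_congr fun t' => ?_
    rw [lmarginal_singleton]
    rfl
  rw [hlm]
  have hk : (0 : ℝ) ≤ 1 / (2 * r) + 1 := by positivity
  have hk' : (0 : ℝ) ≤ 1 / r + 1 := by positivity
  have hkt : ∀ c : ℝ, ENNReal.ofReal c ≠ ⊤ := fun c => ENNReal.ofReal_ne_top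
  calc ENNReal.ofReal (u x ^ 2) = NS [u] x := by simp [NS]
    _ ≤ _ := s1
    _ ≤ ENNReal.ofReal (1 / (2 * r) + 1) * ∫⁻ t in Set.Icc (-r) r,
        (ENNReal.ofReal (1 / (2 * r) + 1) * ∫⁻ t' in Set.Icc (-r) r,
          (ENNReal.ofReal (1 / r + 1) * ∫⁻ t'' in Set.Icc (-r) 0,
          F (Function.update (Function.update (Function.update x 1 t) 2 t') 0 t''))) := by
        gcongr with t
        refine (s2 t).trans ?_
        gcongr with t'
        exact s3 t t'
    _ = _ := by
        simp_rw [lintegral_const_mul' _ _ (hkt _)]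
        rw [ENNReal.ofReal_mul hk', ENNReal.ofReal_pow hk]
        ring

theorem sup_est {r r' : ℝ} (hr : 0 < r) (hrr : r < r') (hr4 : r' ≤ 4) :
    ∃ C : ℝ, 0 < C ∧ ∀ u, Sol u → ∀ x ∈ P r, u x ^ 2 ≤ C * ∫ x in P r', (u x) ^ 2 := by
  obtain ⟨C0, hC0, h0⟩ := iter_est' [] (by simp) hr hrr hr4
  obtain ⟨C1, hC1, h1⟩ := iter_est' [1] (by simp) hr hrr hr4
  obtain ⟨C2, hC2, h2⟩ := iter_est' [2] (by simp) hr hrr hr4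
  obtain ⟨C3, hC3, h3⟩ := iter_est' [1, 2] (by simp) hr hrr hr4
  refine ⟨((1 / r + 1) * (1 / (2 * r) + 1) ^ 2) * (8 * (C0 + C1 + C2 + C3)), by positivity,
    fun u hu x hx => ?_⟩
  have hI : 0 ≤ ∫ x in P r', (u x) ^ 2 := integral_nonneg fun x => sq_nonneg _
  set I := ∫ x in P r', (u x) ^ 2
  have hs := NS_sob hr hu.1 hx
  have l0 : ∀ G ∈ [u], ContDiff ℝ (⊤ : ℕ∞) G := by simpa using hu.1
  have l3 := dup_smooth (i := 0) (dup_smooth (i := 2) (dup_smooth (i := 1) l0))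
  have b0 := mul_nonneg hC0.le hI
  have b1 := mul_nonneg hC1.le hI
  have b2 := mul_nonneg hC2.le hI
  have b3 := mul_nonneg hC3.le hI
  have hB : ∀ G ∈ dup 0 (dup 2 (dup 1 [u])), ∫ x in P r, G x ^ 2 ≤ (C0 + C1 + C2 + C3) * I := by
    have t0 := h0 u hu
    have t1 := h1 u hu
    have t2 := h2 u hu
    have t3 := h3 u hu
    simp only [DL] at t0 t1 t2 t3
    intro G hG
    simp only [dup, List.flatMap_cons, List.flatMap_nil, List.cons_append, List.nil_append,
      List.append_nil, List.mem_cons, List.not_mem_nil, or_false] at hG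
    rcases hG with rfl | rfl | rfl | rfl | rfl | rfl | rfl | rfl <;> linarith [t0.1, t0.2, t1.1, t1.2, t2.1, t2.2, t3.1, t3.2]
  have hN := NS_int (fun G hG => (l3 G hG).continuous) hB
  have hlen : (dup 0 (dup 2 (dup 1 [u]))).length = 8 := by simp [dup]
  rw [hlen] at hN
  have := hs.trans (mul_le_mul_right hN _)
  have e8 : ((8 : ℕ) : ENNReal) = ENNReal.ofReal 8 := by simp
  rw [e8, ← ENNReal.ofReal_mul (by norm_num), ← ENNReal.ofReal_mul (by positivity)] at this
  have := (ENNReal.ofReal_le_ofReal_iff (by positivity)).1 this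
  linarith

theorem deriv_sup_est (l : List (Fin 3)) (hl : ∀ i ∈ l, i ≠ 0) :
    ∃ C : ℝ, 0 < C ∧ ∀ u, Sol u → ∀ x ∈ P 1, |DL l u x| ≤ C * √(∫ x in P (7 / 5), (u x) ^ 2) := by
  obtain ⟨C, hC, h⟩ := sup_est (r := 1) (r' := 6 / 5) (by norm_num) (by norm_num) (by norm_num)
  obtain ⟨C', hC', h'⟩ := iter_est l hl (r := 6 / 5) (r' := 7 / 5) (by norm_num) (by norm_num)
    (by norm_num)
  refine ⟨√(C * C'), by positivity, fun u hu x hx => ?_⟩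
  rw [← Real.sqrt_mul (by positivity)]
  apply Real.abs_le_sqrt
  refine (h _ (hu.DL hl) x hx).trans ?_
  rw [mul_assoc]
  exact mul_le_mul_of_nonneg_left (h' u hu) hC.le

/-! ### Part 3: maximum principle -/

def Kc : Set (Fin 3 → ℝ) := {x | (-1 ≤ x 0 ∧ x 0 ≤ 0) ∧ x 1 ^ 2 + x 2 ^ 2 ≤ 1}

theorem Kc_sub : Kc ⊆ P 1 := by
  rintro x ⟨h0, h1⟩
  rw [mem_P]
  refine ⟨h0, ⟨?_, ?_⟩, ?_, ?_⟩ <;> nlinarith [sq_nonneg (x 1), sq_nonneg (x 2)]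

theorem Kc_compact : IsCompact Kc := by
  refine (P_compact 1).of_isClosed_subset ?_ Kc_sub
  have h : ∀ i : Fin 3, Continuous fun x : Fin 3 → ℝ => x i := fun i => continuous_apply i
  refine IsClosed.inter (IsClosed.inter ?_ ?_) ?_
  · exact isClosed_le continuous_const (h 0)
  · exact isClosed_le (h 0) continuous_const
  · exact isClosed_le (((h 1).pow 2).add ((h 2).pow 2)) continuous_const

theorem second_deriv_nonpos {f : ℝ → ℝ} {x : ℝ} (h : IsLocalMax f x) (hc : ContinuousAt f x) :
    deriv (deriv f) x ≤ 0 := by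
  by_contra! hpos
  have h1 := isLocalMin_of_deriv_deriv_pos hpos h.deriv_eq_zero hc
  have h2 : f =ᶠ[𝓝 x] fun _ => f x := by
    filter_upwards [h, h1] with y a b using le_antisymm a b
  have h3 := h2.deriv.deriv_eq
  simp at h3
  linarith

theorem deriv_nonneg_of_left_max {f : ℝ → ℝ} {x A : ℝ} (hf : HasDerivAt f A x)
    (h : ∀ᶠ y in 𝓝[<] x, f y ≤ f x) : 0 ≤ A := by
  have ht : Tendsto (slope f x) (𝓝[<] x) (𝓝 A) := (hasDerivAt_iff_tendsto_slope.1 hf).mono_left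
    (nhdsWithin_mono x (s := Set.Iio x) (fun y hy => ne_of_lt hy))
  refine ge_of_tendsto ht ?_
  filter_upwards [h, self_mem_nhdsWithin] with y hy hlt
  rw [slope_def_field]
  exact div_nonneg_of_nonpos (by linarith) (by have : y < x := hlt
                                               linarith)

theorem max_principle {Z : (Fin 3 → ℝ) → ℝ} (hZ : ContinuousOn Z Kc) {q g B : ℝ} (hq : 0 ≤ q)
    (hg : 0 < g) (D : (Fin 3 → ℝ) → ℝ)
    (hpde : ∀ x ∈ Kc, -1 < x 0 → x 1 ^ 2 + x 2 ^ 2 < 1 → ∃ A,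
      HasDerivAt (fun τ => Z (Function.update x 0 τ)) A (x 0) ∧
      ContinuousAt (fun τ => Z (Function.update x 1 τ)) (x 1) ∧
      ContinuousAt (fun τ => Z (Function.update x 2 τ)) (x 2) ∧
      A ≤ q * deriv (deriv (fun τ => Z (Function.update x 1 τ))) (x 1)
        + deriv (deriv (fun τ => Z (Function.update x 2 τ))) (x 2)
        + D x * deriv (fun τ => Z (Function.update x 1 τ)) (x 1) + g)
    (hb : ∀ x ∈ Kc, (x 0 = -1 ∨ x 1 ^ 2 + x 2 ^ 2 = 1) → Z x ≤ B) :
    ∀ x ∈ Kc, Z x ≤ B + 2 * g := by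
  have hc : ContinuousOn (fun x : Fin 3 → ℝ => Z x - 2 * g * (x 0 + 1)) Kc :=
    hZ.sub (by fun_prop)
  obtain ⟨m, hm, hmax⟩ := Kc_compact.exists_isMaxOn
    ⟨0, by simp [Kc]⟩ hc
  replace hmax : ∀ x ∈ Kc, Z x - 2 * g * (x 0 + 1) ≤ Z m - 2 * g * (m 0 + 1) := fun x hx => hmax hx
  have hm' := hm
  obtain ⟨⟨m0, m0'⟩, m1⟩ := hm'
  by_cases hbd : m 0 = -1 ∨ m 1 ^ 2 + m 2 ^ 2 = 1
  · intro x hx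
    have h1 := hmax x hx
    have h2 := hb m hm hbd
    have h3 : 0 ≤ 2 * g * (m 0 + 1) := by
      have : 0 ≤ m 0 + 1 := by linarith
      positivity
    have h4 : 2 * g * (x 0 + 1) ≤ 2 * g := by nlinarith [hx.1.2]
    linarith
  · exfalso
    push Not at hbd
    have i0 : -1 < m 0 := lt_of_le_of_ne m0 (Ne.symm hbd.1)
    have i1 : m 1 ^ 2 + m 2 ^ 2 < 1 := lt_of_le_of_ne m1 hbd.2
    obtain ⟨A, hA, c1, c2, hle⟩ := hpde m hm i0 i1
    have L1 : IsLocalMax (fun τ => Z (Function.update m 1 τ)) (m 1) := by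
      have : ∀ᶠ τ in 𝓝 (m 1), τ ^ 2 + m 2 ^ 2 < 1 :=
        (by fun_prop : Continuous fun τ : ℝ => τ ^ 2 + m 2 ^ 2).continuousAt.eventually_lt
          continuousAt_const i1
      filter_upwards [this] with τ hτ
      have := hmax (Function.update m 1 τ) ⟨by simpa using hm.1, by simpa using hτ.le⟩
      simpa using this
    have L2 : IsLocalMax (fun τ => Z (Function.update m 2 τ)) (m 2) := by
      have : ∀ᶠ τ in 𝓝 (m 2), m 1 ^ 2 + τ ^ 2 < 1 :=
        (by fun_prop : Continuous fun τ : ℝ => m 1 ^ 2 + τ ^ 2).continuousAt.eventually_lt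
          continuousAt_const i1
      filter_upwards [this] with τ hτ
      have := hmax (Function.update m 2 τ) ⟨by simpa using hm.1, by simpa using hτ.le⟩
      simpa using this
    have hT : 0 ≤ A - 2 * g := by
      have hd : HasDerivAt (fun τ => Z (Function.update m 0 τ) - 2 * g * (τ + 1)) (A - 2 * g)
          (m 0) := by
        simpa using hA.fun_sub (((hasDerivAt_id (m 0)).add_const 1).const_mul (2 * g))
      refine deriv_nonneg_of_left_max hd ?_
      have : ∀ᶠ τ in 𝓝[<] (m 0), -1 < τ :=
        nhdsWithin_le_nhds (eventually_gt_nhds i0)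
      filter_upwards [this, self_mem_nhdsWithin] with τ h1 h2
      have h2' : τ < m 0 := h2
      have := hmax (Function.update m 0 τ) ⟨by simpa using ⟨h1.le, h2'.le.trans m0'⟩, by simpa using m1⟩
      simpa using this
    have S1 := second_deriv_nonpos L1 c1
    have S2 := second_deriv_nonpos L2 c2
    rw [L1.deriv_eq_zero] at hle
    nlinarith

/-! ### Part 4: correctors -/

def Lop (q : ℝ) (D : (Fin 3 → ℝ) → ℝ) (w : (Fin 3 → ℝ) → ℝ) (x : Fin 3 → ℝ) : ℝ :=
  pd w 0 x - q * pd (pd w 1) 1 x - pd (pd w 2) 2 x - D x * pd w 1 x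

theorem Lop_add {q : ℝ} {D v w : (Fin 3 → ℝ) → ℝ} (hv : ContDiff ℝ (⊤ : ℕ∞) v)
    (hw : ContDiff ℝ (⊤ : ℕ∞) w) (x : Fin 3 → ℝ) :
    Lop q D (fun y => v y + w y) x = Lop q D v x + Lop q D w x := by
  have e : ∀ i, pd (fun y => v y + w y) i = fun y => pd v i y + pd w i y := fun i =>
    funext fun y => pd_add (smooth_diff hv y) (smooth_diff hw y) i
  unfold Lop
  simp only [e]
  rw [pd_add (smooth_diff (pd_contDiff hv 1) x) (smooth_diff (pd_contDiff hw 1) x),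
    pd_add (smooth_diff (pd_contDiff hv 2) x) (smooth_diff (pd_contDiff hw 2) x)]
  ring

theorem pd_coef {c : ℝ → ℝ} {c' : ℝ} {x : Fin 3 → ℝ} (hc : HasDerivAt c c' (x 2)) (i : Fin 3) :
    pd (fun y => c (y 2)) i x = if i = 2 then c' else 0 := by
  have h := hc.comp_hasFDerivAt x (hasFDerivAt_apply (𝕜 := ℝ) (2 : Fin 3) x)
  have h' : HasFDerivAt (fun y : Fin 3 → ℝ => c (y 2)) _ x := h
  unfold pd
  rw [h'.fderiv]
  fin_cases i <;> simp

theorem Lop_coef {q : ℝ} {D h : (Fin 3 → ℝ) → ℝ} (hh : Sol h) {c c' c'' : ℝ → ℝ}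
    (h1 : ∀ t, HasDerivAt c (c' t) t) (h2 : ∀ t, HasDerivAt c' (c'' t) t)
    {x : Fin 3 → ℝ} (hx : x 0 ∈ Set.Icc (-4 : ℝ) 0) :
    Lop q D (fun y => c (y 2) * h y) x
      = c (x 2) * ((1 - q) * pd (pd h 1) 1 x - D x * pd h 1 x) - c'' (x 2) * h x
        - 2 * c' (x 2) * pd h 2 x := by
  have dc : ∀ x : Fin 3 → ℝ, DifferentiableAt ℝ (fun y : Fin 3 → ℝ => c (y 2)) x := fun x =>
    (h1 (x 2)).differentiableAt.comp x (hasFDerivAt_apply (𝕜 := ℝ) (2 : Fin 3) x).differentiableAt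
  have dc' : ∀ x : Fin 3 → ℝ, DifferentiableAt ℝ (fun y : Fin 3 → ℝ => c' (y 2)) x := fun x =>
    (h2 (x 2)).differentiableAt.comp x (hasFDerivAt_apply (𝕜 := ℝ) (2 : Fin 3) x).differentiableAt
  have dh := smooth_diff hh.1
  have dph := fun i => smooth_diff (pd_contDiff hh.1 i)
  have e0 : pd (fun y => c (y 2) * h y) 0 = fun y => c (y 2) * pd h 0 y := by
    funext y; rw [pd_mul (dc y) (dh y), pd_coef (h1 _)]; simp
  have e1 : pd (fun y => c (y 2) * h y) 1 = fun y => c (y 2) * pd h 1 y := by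
    funext y; rw [pd_mul (dc y) (dh y), pd_coef (h1 _)]; simp
  have e2 : pd (fun y => c (y 2) * h y) 2 = fun y => c' (y 2) * h y + c (y 2) * pd h 2 y := by
    funext y; rw [pd_mul (dc y) (dh y), pd_coef (h1 _)]; simp
  unfold Lop
  rw [e0, e1, e2, pd_mul (dc x) (dph 1 x), pd_coef (h1 _),
    pd_add ((dc' x).fun_mul (dh x)) ((dc x).fun_mul (dph 2 x)), pd_mul (dc' x) (dh x),
    pd_mul (dc x) (dph 2 x), pd_coef (h1 _), pd_coef (h2 _)]
  beta_reduce
  rw [hh.2 x hx]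
  simp
  ring

theorem deriv_sup_est_list (LL : List (List (Fin 3))) (hl : ∀ l ∈ LL, ∀ i ∈ l, i ≠ 0) :
    ∃ C : ℝ, 0 < C ∧ ∀ u, Sol u → ∀ l ∈ LL, ∀ x ∈ P 1,
      |DL l u x| ≤ C * √(∫ x in P (7 / 5), (u x) ^ 2) := by
  induction LL with
  | nil => exact ⟨1, one_pos, by simp⟩
  | cons l LL ih =>
    obtain ⟨C, hC, h⟩ := ih fun l hl' => hl l (List.mem_cons_of_mem _ hl')
    obtain ⟨C', hC', h'⟩ := deriv_sup_est l (hl l List.mem_cons_self)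
    refine ⟨C + C', by positivity, fun u hu l' hl' x hx => ?_⟩
    have hs := Real.sqrt_nonneg (∫ x in P (7 / 5), (u x) ^ 2)
    have p1 := mul_nonneg hC.le hs
    have p2 := mul_nonneg hC'.le hs
    rw [List.mem_cons] at hl'
    rcases hl' with rfl | hl'
    · linarith [h' u hu x hx]
    · linarith [h u hu l' hl' x hx]

theorem abs_coef {a b c d N : ℝ} (ha : |a| ≤ c * d) (hb : |b| ≤ N) :
    |a * b| ≤ c * (d * N) := by
  rw [abs_mul, ← mul_assoc]
  exact mul_le_mul ha hb (abs_nonneg _) ((abs_nonneg _).trans ha)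

theorem abs_sc {a s c : ℝ} (ha : |a| ≤ c) (hs : |s| ≤ 1) : |a * s| ≤ c := by
  rw [abs_mul]
  nlinarith [abs_nonneg a, abs_nonneg s]

theorem corr_alg {β k ω c s cc ss a1 a11 a12 a111 a112 a121 a122 a1111 a1211 : ℝ}
    (hωk : ω * k = 1) (hcc2 : cc = 2 * c ^ 2 - 1) :
    (β ^ 2 / 2 * a11 - β * ω * c * a1) +
        (β * k * c * ((1 - (1 - β ^ 2 / 2)) * a111
            - β * ω * c * a11)
          - -β * ω * c * a1 - 2 * (-β * s) * a12 +
        ((β ^ 2 / 8 * k ^ 2 * cc * ((1 - (1 - β ^ 2 / 2)) * a1111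
            - β * ω * c * a111)
          - -(β ^ 2 / 2) * cc * a11
          - 2 * (-(β ^ 2 / 4 * k) * ss) * a112) +
        (-(2 * β * k ^ 2) * s * ((1 - (1 - β ^ 2 / 2)) * a1211
            - β * ω * c * a121)
          - 2 * β * s * a12
          - 2 * (-(2 * β * k) * c) * a122)))
        = β ^ 3 / 2 * k * c * a111
          + β ^ 4 / 16 * k ^ 2 * cc * a1111
          - β ^ 3 / 8 * k * c * cc * a111
          + β ^ 2 / 2 * k * ss * a112
          - β ^ 3 * k ^ 2 * s * a1211
          + 2 * β ^ 2 * k * c * s * a121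
          + 4 * β * k * c * a122 := by
      rw [hcc2]
      linear_combination (-(β ^ 2 * c ^ 2 * a11)
        - β ^ 3 / 8 * k * (2 * c ^ 2 - 1) * c * a111
        + 2 * β ^ 2 * k * s * c * a121) * hωk

set_option maxHeartbeats 1000000 in
theorem corrector : ∃ C : ℝ, 0 < C ∧ ∀ u, Sol u → ∀ β δ p : ℝ, 0 ≤ β → β ≤ 2 → 0 < δ → δ ≤ 1 →
    ∃ w, ContDiff ℝ (⊤ : ℕ∞) w ∧ ∀ x ∈ P 1,
      |w x - u x| ≤ C * δ * √(∫ x in P (7 / 5), (u x) ^ 2) ∧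
      |Lop (1 - β ^ 2 / 2) (fun y => 2 * π * β / δ * Real.cos (2 * π / δ * y 2 + p)) w x|
        ≤ C * δ * √(∫ x in P (7 / 5), (u x) ^ 2) := by
  obtain ⟨C, hC, hsup⟩ := deriv_sup_est_list [[1], [1,1], [1,2], [1,1,1], [1,1,1,1], [1,1,2],
    [1,2,1,1], [1,2,1], [1,2,2]] (by decide)
  refine ⟨50 * C, by positivity, fun u hu β δ p hβ hβ2 hδ hδ1 => ?_⟩
  set M := √(∫ x in P (7 / 5), (u x) ^ 2) with hM
  have hM0 : 0 ≤ M := Real.sqrt_nonneg _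
  set ω := 2 * π / δ with hω
  set k := δ / (2 * π) with hk
  have hωk : ω * k = 1 := by rw [hω, hk]; field_simp
  have hk0 : 0 < k := by positivity
  have hkδ : k ≤ δ := by
    rw [hk]; apply div_le_self hδ.le; linarith [Real.pi_gt_three]
  have hlin : ∀ t, HasDerivAt (fun t => ω * t + p) ω t := fun t => by
    simpa using ((hasDerivAt_id t).const_mul ω).add_const p
  have hcos : ∀ t, HasDerivAt (fun t => Real.cos (ω * t + p)) (-Real.sin (ω * t + p) * ω) t :=
    fun t => (hlin t).cos
  have hsin : ∀ t, HasDerivAt (fun t => Real.sin (ω * t + p)) (Real.cos (ω * t + p) * ω) t :=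
    fun t => (hlin t).sin
  have hcos2 : ∀ t, HasDerivAt (fun t => Real.cos (2 * (ω * t + p)))
      (-Real.sin (2 * (ω * t + p)) * (2 * ω)) t := fun t => ((hlin t).const_mul 2).cos
  have hsin2 : ∀ t, HasDerivAt (fun t => Real.sin (2 * (ω * t + p)))
      (Real.cos (2 * (ω * t + p)) * (2 * ω)) t := fun t => ((hlin t).const_mul 2).sin
  -- correctors
  have c1 : ∀ t, HasDerivAt (fun t => β * k * Real.cos (ω * t + p))
      (-β * Real.sin (ω * t + p)) t := fun t => by
    refine ((hcos t).const_mul (β * k)).congr_deriv ?_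
    linear_combination (-β * Real.sin (ω * t + p)) * hωk
  have c2 : ∀ t, HasDerivAt (fun t => -β * Real.sin (ω * t + p))
      (-β * ω * Real.cos (ω * t + p)) t := fun t => by
    refine ((hsin t).const_mul (-β)).congr_deriv ?_
    ring
  have f1 : ∀ t, HasDerivAt (fun t => β ^ 2 / 8 * k ^ 2 * Real.cos (2 * (ω * t + p)))
      (-(β ^ 2 / 4 * k) * Real.sin (2 * (ω * t + p))) t := fun t => by
    refine ((hcos2 t).const_mul (β ^ 2 / 8 * k ^ 2)).congr_deriv ?_
    linear_combination (-(β ^ 2 / 4 * k) * Real.sin (2 * (ω * t + p))) * hωk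
  have f2 : ∀ t, HasDerivAt (fun t => -(β ^ 2 / 4 * k) * Real.sin (2 * (ω * t + p)))
      (-(β ^ 2 / 2) * Real.cos (2 * (ω * t + p))) t := fun t => by
    refine ((hsin2 t).const_mul (-(β ^ 2 / 4 * k))).congr_deriv ?_
    linear_combination (-(β ^ 2 / 2) * Real.cos (2 * (ω * t + p))) * hωk
  have e1 : ∀ t, HasDerivAt (fun t => -(2 * β * k ^ 2) * Real.sin (ω * t + p))
      (-(2 * β * k) * Real.cos (ω * t + p)) t := fun t => by
    refine ((hsin t).const_mul (-(2 * β * k ^ 2))).congr_deriv ?_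
    linear_combination (-(2 * β * k) * Real.cos (ω * t + p)) * hωk
  have e2 : ∀ t, HasDerivAt (fun t => -(2 * β * k) * Real.cos (ω * t + p))
      (2 * β * Real.sin (ω * t + p)) t := fun t => by
    refine ((hcos t).const_mul (-(2 * β * k))).congr_deriv ?_
    linear_combination (2 * β * Real.sin (ω * t + p)) * hωk
  have n1 : (1 : Fin 3) ≠ 0 := by decide
  have n2 : (2 : Fin 3) ≠ 0 := by decide
  have s1 := hu.pd 1 n1
  have s11 := s1.pd 1 n1
  have s12 := s1.pd 2 n2
  have hp : ContDiff ℝ (⊤ : ℕ∞) (fun x : Fin 3 → ℝ => x 2) := contDiff_apply ℝ ℝ 2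
  have sw1 : ContDiff ℝ (⊤ : ℕ∞) (fun y : Fin 3 → ℝ =>
      β * k * Real.cos (ω * y 2 + p) * pd u 1 y) := by
    exact (contDiff_const.mul ((contDiff_const.mul hp).add contDiff_const).cos).mul s1.1
  have sw2 : ContDiff ℝ (⊤ : ℕ∞) (fun y : Fin 3 → ℝ =>
      β ^ 2 / 8 * k ^ 2 * Real.cos (2 * (ω * y 2 + p)) * pd (pd u 1) 1 y) := by
    exact (contDiff_const.mul (contDiff_const.mul
      ((contDiff_const.mul hp).add contDiff_const)).cos).mul s11.1
  have sw3 : ContDiff ℝ (⊤ : ℕ∞) (fun y : Fin 3 → ℝ =>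
      -(2 * β * k ^ 2) * Real.sin (ω * y 2 + p) * pd (pd u 1) 2 y) := by
    exact (contDiff_const.mul ((contDiff_const.mul hp).add contDiff_const).sin).mul s12.1
  refine ⟨fun y => u y + (β * k * Real.cos (ω * y 2 + p) * pd u 1 y
      + (β ^ 2 / 8 * k ^ 2 * Real.cos (2 * (ω * y 2 + p)) * pd (pd u 1) 1 y
      + -(2 * β * k ^ 2) * Real.sin (ω * y 2 + p) * pd (pd u 1) 2 y)),
    hu.1.add (sw1.add (sw2.add sw3)), fun x hx => ?_⟩
  have hx0 : x 0 ∈ Set.Icc (-4 : ℝ) 0 := by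
    have := (mem_P.1 hx).1
    exact ⟨by linarith, this.2⟩
  have B := fun l hl => hsup u hu l hl x hx
  have b1 : |pd u 1 x| ≤ C * M := B [1] (by decide)
  have b11 : |pd (pd u 1) 1 x| ≤ C * M := B [1, 1] (by decide)
  have b12 : |pd (pd u 1) 2 x| ≤ C * M := B [1, 2] (by decide)
  have b111 : |pd (pd (pd u 1) 1) 1 x| ≤ C * M := B [1, 1, 1] (by decide)
  have b1111 : |pd (pd (pd (pd u 1) 1) 1) 1 x| ≤ C * M := B [1, 1, 1, 1] (by decide)
  have b112 : |pd (pd (pd u 1) 1) 2 x| ≤ C * M := B [1, 1, 2] (by decide)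
  have b1211 : |pd (pd (pd (pd u 1) 2) 1) 1 x| ≤ C * M := B [1, 2, 1, 1] (by decide)
  have b121 : |pd (pd (pd u 1) 2) 1 x| ≤ C * M := B [1, 2, 1] (by decide)
  have b122 : |pd (pd (pd u 1) 2) 2 x| ≤ C * M := B [1, 2, 2] (by decide)
  set c := Real.cos (ω * x 2 + p) with hc
  set s := Real.sin (ω * x 2 + p) with hs
  set cc := Real.cos (2 * (ω * x 2 + p)) with hcc
  set ss := Real.sin (2 * (ω * x 2 + p)) with hss
  have ac : |c| ≤ 1 := Real.abs_cos_le_one _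
  have as : |s| ≤ 1 := Real.abs_sin_le_one _
  have acc : |cc| ≤ 1 := Real.abs_cos_le_one _
  have ass : |ss| ≤ 1 := Real.abs_sin_le_one _
  have hbb : β ^ 2 ≤ 4 := by nlinarith
  have hbbb : β ^ 3 ≤ 8 := by nlinarith [mul_nonneg hβ hβ]
  have hb4 : β ^ 4 ≤ 16 := by nlinarith [mul_nonneg hβ hβ, sq_nonneg (β ^ 2)]
  have hk2 : k ^ 2 ≤ k := by nlinarith
  have hk2' : k ^ 2 ≤ δ := hk2.trans hkδ
  have pm : ∀ a b c d : ℝ, 0 ≤ a → 0 ≤ b → a ≤ c → b ≤ d → |a * b| ≤ c * d := by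
    intro a b c d ha hb hac hbd
    rw [abs_of_nonneg (mul_nonneg ha hb)]
    exact mul_le_mul hac hbd hb (ha.trans hac)
  have hcm : 0 ≤ δ * (C * M) := by positivity
  constructor
  · have t1 := abs_coef (abs_sc (pm β k 2 δ hβ hk0.le hβ2 hkδ) ac) b1
    have t2 := abs_coef (abs_sc (pm (β ^ 2 / 8) (k ^ 2) 1 δ (by positivity) (by positivity)
      (by linarith) hk2') acc) b11
    have t3 := abs_coef (abs_sc (pm (2 * β) (k ^ 2) 4 δ (by positivity) (by positivity)
      (by linarith) hk2') as) b12
    rw [show 50 * C * δ * M = 50 * (δ * (C * M)) by ring]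
    rw [abs_le] at t1 t2 t3 ⊢
    constructor <;> linarith [t1.1, t1.2, t2.1, t2.2, t3.1, t3.2]
  · have L0 : Lop (1 - β ^ 2 / 2) (fun y => 2 * π * β / δ * Real.cos (ω * y 2 + p)) u x
        = β ^ 2 / 2 * pd (pd u 1) 1 x - 2 * π * β / δ * c * pd u 1 x := by
      unfold Lop
      rw [hu.2 x hx0]
      ring
    rw [Lop_add hu.1 (sw1.add (sw2.add sw3)), Lop_add sw1 (sw2.add sw3), Lop_add sw2 sw3,
      Lop_coef s1 c1 c2 hx0, Lop_coef s11 f1 f2 hx0, Lop_coef s12 e1 e2 hx0, L0]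
    rw [show 2 * π * β / δ = β * ω by rw [hω]; ring]
    have hcc2 : cc = 2 * c ^ 2 - 1 := Real.cos_two_mul _
    have t1 := abs_coef (abs_sc (pm (β ^ 3 / 2) k 4 δ (by positivity) hk0.le (by linarith) hkδ) ac)
      b111
    have t2 := abs_coef (abs_sc (pm (β ^ 4 / 16) (k ^ 2) 1 δ (by positivity) (by positivity)
      (by linarith) hk2') acc) b1111
    have t3 := abs_coef (abs_sc (abs_sc (pm (β ^ 3 / 8) k 1 δ (by positivity) hk0.le (by linarith)
      hkδ) ac) acc) b111
    have t4 := abs_coef (abs_sc (pm (β ^ 2 / 2) k 2 δ (by positivity) hk0.le (by linarith) hkδ) ass)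
      b112
    have t5 := abs_coef (abs_sc (pm (β ^ 3) (k ^ 2) 8 δ (by positivity) (by positivity)
      (by linarith) hk2') as) b1211
    have t6 := abs_coef (abs_sc (abs_sc (pm (2 * β ^ 2) k 8 δ (by positivity) hk0.le (by linarith)
      hkδ) ac) as) b121
    have t7 := abs_coef (abs_sc (pm (4 * β) k 8 δ (by positivity) hk0.le (by linarith) hkδ) ac)
      b122
    rw [corr_alg hωk hcc2]
    rw [show 50 * C * δ * M = 50 * (δ * (C * M)) by ring]
    rw [abs_le] at t1 t2 t3 t4 t5 t6 t7 ⊢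
    constructor <;> linarith [t1.1, t1.2, t2.1, t2.2, t3.1, t3.2, t4.1, t4.2, t5.1, t5.2, t6.1,
      t6.2, t7.1, t7.2]

/-! ### Part 5: comparison -/

theorem compare_one {V w D : (Fin 3 → ℝ) → ℝ} (hV : ContinuousOn V Kc)
    (hw : ContDiff ℝ (⊤ : ℕ∞) w) {q g B σ : ℝ} (hq : 0 ≤ q) (hg : 0 < g) (hσ : |σ| = 1)
    (hpde : ∀ x ∈ Kc, -1 < x 0 → x 1 ^ 2 + x 2 ^ 2 < 1 → ∃ (A0 A11 A22 : ℝ) (V1 V2 : ℝ → ℝ),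
      HasDerivAt (fun τ => V (Function.update x 0 τ)) A0 (x 0) ∧
      (∀ᶠ τ in 𝓝 (x 1), HasDerivAt (fun τ => V (Function.update x 1 τ)) (V1 τ) τ) ∧
      HasDerivAt V1 A11 (x 1) ∧
      (∀ᶠ τ in 𝓝 (x 2), HasDerivAt (fun τ => V (Function.update x 2 τ)) (V2 τ) τ) ∧
      HasDerivAt V2 A22 (x 2) ∧ A0 = q * A11 + A22 + D x * V1 (x 1))
    (hL : ∀ x ∈ Kc, |Lop q D w x| ≤ g)
    (hb : ∀ x ∈ Kc, (x 0 = -1 ∨ x 1 ^ 2 + x 2 ^ 2 = 1) → |V x - w x| ≤ B) :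
    ∀ x ∈ Kc, σ * (V x - w x) ≤ B + 2 * g := by
  have hwc : Continuous w := hw.continuous
  have hs : ∀ y : ℝ, σ * y ≤ |y| := fun y => by
    calc σ * y ≤ |σ * y| := le_abs_self _
      _ = |y| := by rw [abs_mul, hσ, one_mul]
  refine max_principle (Z := fun x => σ * (V x - w x))
    (continuousOn_const.mul (hV.sub hwc.continuousOn)) hq hg D ?_
    (fun x hx h => (hs _).trans (hb x hx h))
  intro x hx h0 h1
  obtain ⟨A0, A11, A22, V1, V2, v0, v1, v11, v2, v22, e⟩ := hpde x hx h0 h1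
  have W : ∀ i : Fin 3, ∀ τ, HasDerivAt (fun τ => w (Function.update x i τ))
      (pd w i (Function.update x i τ)) τ := fun i τ => slice_hasDerivAt i τ (smooth_diff hw _)
  have WW : ∀ i : Fin 3, ∀ τ, HasDerivAt (fun τ => pd w i (Function.update x i τ))
      (pd (pd w i) i (Function.update x i τ)) τ :=
    fun i τ => slice_hasDerivAt i τ (smooth_diff (pd_contDiff hw i) _)
  have key : ∀ (i : Fin 3) (Vi : ℝ → ℝ) (A : ℝ),
      (∀ᶠ τ in 𝓝 (x i), HasDerivAt (fun τ => V (Function.update x i τ)) (Vi τ) τ) →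
      HasDerivAt Vi A (x i) →
      ContinuousAt (fun τ => σ * (V (Function.update x i τ) - w (Function.update x i τ))) (x i) ∧
      deriv (fun τ => σ * (V (Function.update x i τ) - w (Function.update x i τ))) (x i)
        = σ * (Vi (x i) - pd w i x) ∧
      deriv (deriv (fun τ => σ * (V (Function.update x i τ) - w (Function.update x i τ)))) (x i)
        = σ * (A - pd (pd w i) i x) := by
    intro i Vi A h hA
    have hd : ∀ᶠ τ in 𝓝 (x i), HasDerivAt
        (fun τ => σ * (V (Function.update x i τ) - w (Function.update x i τ)))
        (σ * (Vi τ - pd w i (Function.update x i τ))) τ := by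
      filter_upwards [h] with τ hτ
      exact (hτ.fun_sub (W i τ)).const_mul σ
    refine ⟨hd.self_of_nhds.continuousAt, by simpa using hd.self_of_nhds.deriv, ?_⟩
    have he : deriv (fun τ => σ * (V (Function.update x i τ) - w (Function.update x i τ)))
        =ᶠ[𝓝 (x i)] fun τ => σ * (Vi τ - pd w i (Function.update x i τ)) := by
      filter_upwards [hd] with τ hτ using hτ.deriv
    rw [he.deriv_eq]
    simpa using ((hA.fun_sub (WW i (x i))).const_mul σ).deriv
  obtain ⟨k1, k1', k1''⟩ := key 1 V1 A11 v1 v11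
  obtain ⟨k2, -, k2''⟩ := key 2 V2 A22 v2 v22
  refine ⟨σ * (A0 - pd w 0 x), ?_, k1, k2, ?_⟩
  · simpa using (v0.fun_sub (W 0 (x 0))).const_mul σ
  · rw [k1', k1'', k2'', e]
    have h3 := hs (-(Lop q D w x))
    rw [abs_neg] at h3
    have h4 := h3.trans (hL x hx)
    unfold Lop at h4
    nlinarith

theorem compare {V w D : (Fin 3 → ℝ) → ℝ} (hV : ContinuousOn V Kc)
    (hw : ContDiff ℝ (⊤ : ℕ∞) w) {q g B : ℝ} (hq : 0 ≤ q) (hg : 0 < g)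
    (hpde : ∀ x ∈ Kc, -1 < x 0 → x 1 ^ 2 + x 2 ^ 2 < 1 → ∃ (A0 A11 A22 : ℝ) (V1 V2 : ℝ → ℝ),
      HasDerivAt (fun τ => V (Function.update x 0 τ)) A0 (x 0) ∧
      (∀ᶠ τ in 𝓝 (x 1), HasDerivAt (fun τ => V (Function.update x 1 τ)) (V1 τ) τ) ∧
      HasDerivAt V1 A11 (x 1) ∧
      (∀ᶠ τ in 𝓝 (x 2), HasDerivAt (fun τ => V (Function.update x 2 τ)) (V2 τ) τ) ∧
      HasDerivAt V2 A22 (x 2) ∧ A0 = q * A11 + A22 + D x * V1 (x 1))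
    (hL : ∀ x ∈ Kc, |Lop q D w x| ≤ g)
    (hb : ∀ x ∈ Kc, (x 0 = -1 ∨ x 1 ^ 2 + x 2 ^ 2 = 1) → |V x - w x| ≤ B) :
    ∀ x ∈ Kc, |V x - w x| ≤ B + 2 * g := by
  intro x hx
  have h1 := compare_one (σ := 1) hV hw hq hg (by simp) hpde hL hb x hx
  have h2 := compare_one (σ := -1) hV hw hq hg (by simp) hpde hL hb x hx
  rw [abs_le]
  constructor <;> linarith

/-- The rescaled homogenization estimate. -/
theorem rescaled : ∃ C : ℝ, 0 < C ∧ ∀ u, Sol u → ∀ β δ p : ℝ, 0 ≤ β → β ^ 2 ≤ 2 → 0 < δ →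
    ∀ V : (Fin 3 → ℝ) → ℝ, ContinuousOn V Kc →
    (∀ x ∈ Kc, -1 < x 0 → x 1 ^ 2 + x 2 ^ 2 < 1 → ∃ (A0 A11 A22 : ℝ) (V1 V2 : ℝ → ℝ),
      HasDerivAt (fun τ => V (Function.update x 0 τ)) A0 (x 0) ∧
      (∀ᶠ τ in 𝓝 (x 1), HasDerivAt (fun τ => V (Function.update x 1 τ)) (V1 τ) τ) ∧
      HasDerivAt V1 A11 (x 1) ∧
      (∀ᶠ τ in 𝓝 (x 2), HasDerivAt (fun τ => V (Function.update x 2 τ)) (V2 τ) τ) ∧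
      HasDerivAt V2 A22 (x 2) ∧ A0 = (1 - β ^ 2 / 2) * A11 + A22
        + 2 * π * β / δ * Real.cos (2 * π / δ * x 2 + p) * V1 (x 1)) →
    (∀ x ∈ Kc, (x 0 = -1 ∨ x 1 ^ 2 + x 2 ^ 2 = 1) → V x = u x) →
    ∀ x ∈ Kc, |V x - u x| ≤ C * δ * √(∫ x in P (7 / 5), (u x) ^ 2) := by
  obtain ⟨C1, hC1, H1⟩ := corrector
  obtain ⟨C2, hC2, H2⟩ := deriv_sup_est [] (by simp)
  refine ⟨4 * C1 + 2 * C2, by positivity, fun u hu β δ p hβ hβ2 hδ V hV hpde hb x hx => ?_⟩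
  have hM := Real.sqrt_nonneg (∫ x in P (7 / 5), (u x) ^ 2)
  have hm1 := mul_nonneg (mul_nonneg hC1.le hδ.le) hM
  have hm2 := mul_nonneg (mul_nonneg hC2.le hδ.le) hM
  have hm3 := mul_nonneg hC2.le hM
  refine le_of_forall_pos_le_add fun e he => ?_
  rcases le_total δ 1 with h | h
  · obtain ⟨w, hw, hws⟩ := H1 u hu β δ p hβ (by nlinarith) hδ h
    have := compare hV hw (q := 1 - β ^ 2 / 2) (g := C1 * δ * √(∫ x in P (7 / 5), (u x) ^ 2) + e / 2)
      (B := C1 * δ * √(∫ x in P (7 / 5), (u x) ^ 2))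
      (D := fun y => 2 * π * β / δ * Real.cos (2 * π / δ * y 2 + p))
      (by linarith) (by linarith) hpde
      (fun y hy => (hws y (Kc_sub hy)).2.trans (by linarith))
      (fun y hy hy' => by rw [hb y hy hy', abs_sub_comm]; exact (hws y (Kc_sub hy)).1) x hx
    have h2 := (hws x (Kc_sub hx)).1
    have := abs_sub_le (V x) (w x) (u x)
    nlinarith
  · have pd0 : ∀ i : Fin 3, pd (fun _ : Fin 3 → ℝ => (0 : ℝ)) i = fun _ => 0 := fun i => by
      funext y; simp [pd]
    have H2' : ∀ y ∈ Kc, |u y| ≤ C2 * √(∫ x in P (7 / 5), (u x) ^ 2) :=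
      fun y hy => H2 u hu y (Kc_sub hy)
    have := compare hV (w := fun _ => 0) contDiff_const (q := 1 - β ^ 2 / 2) (g := e / 2)
      (B := C2 * √(∫ x in P (7 / 5), (u x) ^ 2))
      (D := fun y => 2 * π * β / δ * Real.cos (2 * π / δ * y 2 + p))
      (by linarith) (by linarith) hpde
      (fun y hy => by simp only [Lop, pd0]; simp; linarith)
      (fun y hy hy' => by rw [hb y hy hy', sub_zero]; exact H2' y hy) x hx
    have h2 := H2' x hx
    have h3 := abs_sub (V x) (u x)
    rw [sub_zero] at this
    nlinarith [mul_le_mul_of_nonneg_left h hm3]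

/-! ### Part 6: PDE expansion and change of variables -/

theorem pde_expand {κ a ε : ℝ} {f : (Fin 2 → ℝ) → ℝ} {x : Fin 2 → ℝ} (hf : ContDiffAt ℝ 2 f x) :
    ∑ i, pd (fun y => ∑ j, aEps κ a ε y i j * pd f j y) i x
      = κ * (pd (pd f 0) 0 x + pd (pd f 1) 1 x)
        + a * ε ^ 2 * (2 * π / ε) * Real.cos (2 * π * x 1 / ε) * pd f 0 x := by
  have dpf : ∀ i, DifferentiableAt ℝ (pd f i) x := fun i => by
    have h := (hf.fderiv_right (m := 1) (by norm_num)).differentiableAt (by norm_num)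
    exact h.clm_apply (differentiableAt_const _)
  have hψ : HasFDerivAt (fun y : Fin 2 → ℝ => a * ε ^ 2 * Real.sin (2 * π * y 1 / ε))
      ((a * ε ^ 2 * (Real.cos (2 * π * x 1 / ε) * (2 * π * 1 / ε))) •
        (ContinuousLinearMap.proj 1 : (Fin 2 → ℝ) →L[ℝ] ℝ)) x := by
    have h0 := hasFDerivAt_apply (𝕜 := ℝ) (F' := fun _ : Fin 2 => ℝ) (1 : Fin 2) x
    have h1 : HasDerivAt (fun t : ℝ => a * ε ^ 2 * Real.sin (2 * π * t / ε))
        (a * ε ^ 2 * (Real.cos (2 * π * x 1 / ε) * (2 * π * 1 / ε))) (x 1) :=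
      ((((hasDerivAt_id (x 1)).const_mul (2 * π)).div_const ε).sin).const_mul _
    have h2 := HasDerivAt.comp_hasFDerivAt (h₂ := fun t : ℝ => a * ε ^ 2 * Real.sin (2 * π * t / ε))
      (f := fun y : Fin 2 → ℝ => y 1) x h1 h0
    exact h2
  have dψ := hψ.differentiableAt
  have pψ0 : pd (fun y : Fin 2 → ℝ => a * ε ^ 2 * Real.sin (2 * π * y 1 / ε)) 0 x = 0 := by
    unfold pd; rw [hψ.fderiv]; simp
  have pψ1 : pd (fun y : Fin 2 → ℝ => a * ε ^ 2 * Real.sin (2 * π * y 1 / ε)) 1 x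
      = a * ε ^ 2 * (2 * π / ε) * Real.cos (2 * π * x 1 / ε) := by
    unfold pd; rw [hψ.fderiv]; simp; ring
  have e0 : (fun y => ∑ j, aEps κ a ε y 0 j * pd f j y) = fun y => κ * pd f 0 y
      + (-1) * ((a * ε ^ 2 * Real.sin (2 * π * y 1 / ε)) * pd f 1 y) := by
    funext y; simp [aEps, Iperp, Fin.sum_univ_two]
  have e1 : (fun y => ∑ j, aEps κ a ε y 1 j * pd f j y) = fun y => κ * pd f 1 y
      + (a * ε ^ 2 * Real.sin (2 * π * y 1 / ε)) * pd f 0 y := by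
    funext y; simp [aEps, Iperp, Fin.sum_univ_two]; ring
  rw [Fin.sum_univ_two, e0, e1,
    pd_add ((dpf 0).const_mul κ) ((dψ.fun_mul (dpf 1)).const_mul (-1)),
    pd_add ((dpf 1).const_mul κ) (dψ.fun_mul (dpf 0)), pd_const_mul (dpf 0),
    pd_const_mul (dpf 1), pd_const_mul (dψ.fun_mul (dpf 1)), pd_mul dψ (dpf 1),
    pd_mul dψ (dpf 0), pψ0, pψ1, pd_comm_at hf 1 0]
  ring

def Xm (c : Fin 2 → ℝ) (l1 l2 : ℝ) (y : Fin 3 → ℝ) : Fin 2 → ℝ := ![c 0 + l1 * y 1, c 1 + l2 * y 2]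

theorem Xm_slice1 {c : Fin 2 → ℝ} {l1 l2 : ℝ} {f : (Fin 2 → ℝ) → ℝ} {x : Fin 3 → ℝ} {τ : ℝ}
    (hf : DifferentiableAt ℝ f (Xm c l1 l2 (Function.update x 1 τ))) :
    HasDerivAt (fun τ => f (Xm c l1 l2 (Function.update x 1 τ)))
      (l1 * pd f 0 (Xm c l1 l2 (Function.update x 1 τ))) τ := by
  have h : HasDerivAt (fun τ => Xm c l1 l2 (Function.update x 1 τ)) (l1 • (Pi.single 0 1 : Fin 2 → ℝ)) τ := by
    rw [hasDerivAt_pi]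
    intro i
    fin_cases i
    · simpa [Xm] using ((hasDerivAt_id τ).const_mul l1).const_add (c 0)
    · simpa [Xm] using hasDerivAt_const τ (c 1 + l2 * x 2)
  have := hf.hasFDerivAt.comp_hasDerivAt τ h
  rw [map_smul] at this
  exact this

theorem Xm_slice2 {c : Fin 2 → ℝ} {l1 l2 : ℝ} {f : (Fin 2 → ℝ) → ℝ} {x : Fin 3 → ℝ} {τ : ℝ}
    (hf : DifferentiableAt ℝ f (Xm c l1 l2 (Function.update x 2 τ))) :
    HasDerivAt (fun τ => f (Xm c l1 l2 (Function.update x 2 τ)))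
      (l2 * pd f 1 (Xm c l1 l2 (Function.update x 2 τ))) τ := by
  have h : HasDerivAt (fun τ => Xm c l1 l2 (Function.update x 2 τ)) (l2 • (Pi.single 1 1 : Fin 2 → ℝ)) τ := by
    rw [hasDerivAt_pi]
    intro i
    fin_cases i
    · simpa [Xm] using hasDerivAt_const τ (c 0 + l1 * x 1)
    · simpa [Xm] using ((hasDerivAt_id τ).const_mul l2).const_add (c 1)
  have := hf.hasFDerivAt.comp_hasDerivAt τ h
  rw [map_smul] at this
  exact this

/-! ### Part 7: geometry of the ellipsoid -/

theorem Xm_mem {κ a ε R S ρ : ℝ} {c : Fin 2 → ℝ} (hκ : 0 < κ)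
    (hK : 0 < κ + a ^ 2 * ε ^ 4 / (2 * κ))
    (hρ : κ * ρ ^ 2 = κ + a ^ 2 * ε ^ 4 / (2 * κ)) (y : Fin 3 → ℝ) :
    Xm c (R * ρ) R y ∈ ellipsoid κ a ε c S ↔ R ^ 2 * (y 1 ^ 2 + y 2 ^ 2) ≤ S ^ 2 := by
  have hρ0 : ρ ≠ 0 := by
    rintro rfl
    rw [← hρ] at hK
    simp at hK
  have : κ * (R * ρ * y 1) ^ 2 / (κ + a ^ 2 * ε ^ 4 / (2 * κ)) = R ^ 2 * y 1 ^ 2 := by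
    rw [← hρ]; field_simp
  simp only [ellipsoid, Xm, Set.mem_ofPred_eq, Matrix.cons_val_zero, Matrix.cons_val_one,
    add_sub_cancel_left]
  rw [this]
  ring_nf

theorem ell_interior_of_lt {κ a ε R : ℝ} {c x : Fin 2 → ℝ}
    (h : κ * (x 0 - c 0) ^ 2 / (κ + a ^ 2 * ε ^ 4 / (2 * κ)) + (x 1 - c 1) ^ 2 < R ^ 2) :
    x ∈ interior (ellipsoid κ a ε c R) := by
  refine mem_interior.2 ⟨{x | κ * (x 0 - c 0) ^ 2 / (κ + a ^ 2 * ε ^ 4 / (2 * κ))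
    + (x 1 - c 1) ^ 2 < R ^ 2}, fun y hy => le_of_lt hy, ?_, by
    rw [Set.mem_ofPred_eq]; exact h⟩
  exact isOpen_lt (by fun_prop) continuous_const

theorem Xm_interior {κ a ε R ρ : ℝ} {c : Fin 2 → ℝ} (hκ : 0 < κ)
    (hK : 0 < κ + a ^ 2 * ε ^ 4 / (2 * κ)) (hR : 0 < R)
    (hρ : κ * ρ ^ 2 = κ + a ^ 2 * ε ^ 4 / (2 * κ)) (y : Fin 3 → ℝ) :
    Xm c (R * ρ) R y ∈ interior (ellipsoid κ a ε c R) ↔ y 1 ^ 2 + y 2 ^ 2 < 1 := by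
  have hR2 : 0 < R ^ 2 := by positivity
  constructor
  · intro h
    have hcont : Continuous fun s : ℝ => Xm c (R * ρ) R (s • y) := by
      unfold Xm
      refine continuous_pi fun i => ?_
      fin_cases i <;> simp <;> fun_prop
    have h1 : ∀ᶠ s in 𝓝 (1 : ℝ), Xm c (R * ρ) R (s • y) ∈ ellipsoid κ a ε c R := by
      refine hcont.continuousAt.eventually_mem ?_
      rw [one_smul]
      exact mem_interior_iff_mem_nhds.1 h
    have h2 : ∀ᶠ s in 𝓝[>] (1 : ℝ), Xm c (R * ρ) R (s • y) ∈ ellipsoid κ a ε c R :=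
      h1.filter_mono nhdsWithin_le_nhds
    obtain ⟨s, hs, hs1⟩ := (h2.and self_mem_nhdsWithin).exists
    have hs1' : 1 < s := hs1
    rw [Xm_mem hκ hK hρ] at hs
    simp only [Pi.smul_apply, smul_eq_mul] at hs
    by_contra! hc
    have h3 : 1 < s ^ 2 * (y 1 ^ 2 + y 2 ^ 2) := by nlinarith
    nlinarith
  · intro h
    apply ell_interior_of_lt
    have hρ0 : ρ ≠ 0 := by
      rintro rfl
      rw [← hρ] at hK
      simp at hK
    have : κ * (R * ρ * y 1) ^ 2 / (κ + a ^ 2 * ε ^ 4 / (2 * κ)) = R ^ 2 * y 1 ^ 2 := by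
      rw [← hρ]; field_simp
    simp only [Xm, Matrix.cons_val_zero, Matrix.cons_val_one, add_sub_cancel_left]
    rw [this]
    nlinarith

theorem Xm_surj {R ρ : ℝ} {c : Fin 2 → ℝ} (hR : R ≠ 0) (hρ : ρ ≠ 0) (x : Fin 2 → ℝ) (s : ℝ) :
    Xm c (R * ρ) R ![s, (x 0 - c 0) / (R * ρ), (x 1 - c 1) / R] = x := by
  funext i
  fin_cases i
  · simp [Xm]; field_simp; ring
  · simp [Xm]; field_simp; ring

/-! ### Part 8: averages -/

theorem sqrt_avg_le {f : (Fin 2 → ℝ) → ℝ} {s : Set (Fin 2 → ℝ)} {B : ℝ} (hB : 0 ≤ B)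
    (h : ∀ x ∈ s, |f x| ≤ B) : √(⨍ x in s, (f x) ^ 2) ≤ B := by
  rw [Real.sqrt_le_left hB, setAverage_eq, smul_eq_mul]
  rcases eq_or_ne (volume s) ⊤ with ht | ht
  · simp only [Measure.real, ht]; simp; positivity
  have h1 := norm_setIntegral_le_of_norm_le_const (μ := volume) (f := fun x => (f x) ^ 2)
    (C := B ^ 2) (lt_top_iff_ne_top.2 ht) (fun x hx => by
      rw [Real.norm_eq_abs, abs_pow]
      exact pow_le_pow_left₀ (abs_nonneg _) (h x hx) 2)
  have h2 := (le_abs_self _).trans h1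
  rcases eq_or_lt_of_le (measureReal_nonneg : 0 ≤ volume.real s) with h0 | h0
  · rw [← h0]; simp; positivity
  · rw [inv_mul_le_iff₀ h0]
    linarith

def Q0 : Set (Fin 3 → ℝ) := {y | (-4 < y 0 ∧ y 0 ≤ 0) ∧ y 1 ^ 2 + y 2 ^ 2 ≤ 4}

def Lmap (l0 l1 l2 : ℝ) (h0 : l0 ≠ 0) (h1 : l1 ≠ 0) (h2 : l2 ≠ 0) :
    (Fin 3 → ℝ) ≃ₗ[ℝ] ℝ × (Fin 2 → ℝ) where
  toFun y := (l0 * y 0, ![l1 * y 1, l2 * y 2])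
  invFun p := ![p.1 / l0, p.2 0 / l1, p.2 1 / l2]
  map_add' x y := by
    ext i
    · simp; ring
    · fin_cases i <;> simp <;> ring
  map_smul' r y := by
    ext i
    · simp; ring
    · fin_cases i <;> simp <;> ring
  left_inv y := by
    funext i
    fin_cases i <;> simp <;> field_simp
  right_inv p := by
    ext i
    · simp; field_simp
    · fin_cases i <;> simp <;> field_simp

theorem avg_change {l0 l1 l2 t₀ : ℝ} (h0 : l0 ≠ 0) (h1 : l1 ≠ 0) (h2 : l2 ≠ 0) (c : Fin 2 → ℝ)
    (f : ℝ × (Fin 2 → ℝ) → ℝ) (s : Set (ℝ × (Fin 2 → ℝ))) :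
    ⨍ p in s, f p = ⨍ y in (fun y => (t₀ + l0 * y 0, Xm c l1 l2 y)) ⁻¹' s,
      f (t₀ + l0 * y 0, Xm c l1 l2 y) := by
  let L := (Lmap l0 l1 l2 h0 h1 h2).toContinuousLinearEquiv
  let e : (Fin 3 → ℝ) ≃ₜ ℝ × (Fin 2 → ℝ) := L.toHomeomorph.trans (Homeomorph.addLeft (t₀, c))
  have he : (fun y : Fin 3 → ℝ => (t₀ + l0 * y 0, Xm c l1 l2 y)) = e := by
    funext y
    change _ = ((t₀, c) : ℝ × (Fin 2 → ℝ)) + (l0 * y 0, ![l1 * y 1, l2 * y 2])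
    ext i
    · simp
    · fin_cases i <;> simp [Xm] <;> rfl
  have he' : ∀ y : Fin 3 → ℝ, (t₀ + l0 * y 0, Xm c l1 l2 y) = e y := fun y => congrFun he y
  have i0 : (volume : Measure (ℝ × (Fin 2 → ℝ))).IsAddHaarMeasure := by
    rw [Measure.volume_eq_prod]; infer_instance
  have hmap : Measure.map e volume
      = (Measure.map L volume).addHaarScalarFactor (volume : Measure (ℝ × (Fin 2 → ℝ)))
        • (volume : Measure (ℝ × (Fin 2 → ℝ))) := by
    have i1 : (Measure.map L (volume : Measure (Fin 3 → ℝ))).IsAddHaarMeasure :=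
      L.isAddHaarMeasure_map _
    have e1 : (e : (Fin 3 → ℝ) → ℝ × (Fin 2 → ℝ)) = (fun p => (t₀, c) + p) ∘ L := rfl
    rw [e1, ← Measure.map_map (by fun_prop) L.continuous.measurable, map_add_left_eq_self]
    exact Measure.isAddLeftInvariant_eq_smul _ _
  have hpos : 0 < (Measure.map L volume).addHaarScalarFactor
      (volume : Measure (ℝ × (Fin 2 → ℝ))) := by
    have i1 : (Measure.map L (volume : Measure (Fin 3 → ℝ))).IsAddHaarMeasure :=
      L.isAddHaarMeasure_map _
    exact Measure.addHaarScalarFactor_pos_of_isAddHaarMeasure _ _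
  set k := (Measure.map L volume).addHaarScalarFactor (volume : Measure (ℝ × (Fin 2 → ℝ)))
  rw [he]
  simp only [he']
  have a1 : ∫ p in s, f p ∂(Measure.map e volume) = ∫ y in e ⁻¹' s, f (e y) :=
    e.measurableEmbedding.setIntegral_map f s
  have a2 : (Measure.map e volume) s = volume (e ⁻¹' s) :=
    e.measurableEmbedding.map_apply volume s
  rw [hmap] at a1 a2
  rw [setAverage_eq, setAverage_eq, ← a1, Measure.real, Measure.real, ← a2, Measure.restrict_smul,
    integral_smul_nnreal_measure]
  have hk : (k : ℝ) ≠ 0 := by exact_mod_cast hpos.ne'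
  simp [ENNReal.toReal_smul, NNReal.smul_def]
  field_simp

theorem Q0_int_le {u : (Fin 3 → ℝ) → ℝ} (hu : Continuous u) :
    ∫ x in P (7 / 5), (u x) ^ 2 ≤ volume.real Q0 * ⨍ x in Q0, (u x) ^ 2 := by
  have hsub : P (7 / 5) ⊆ Q0 := by
    intro x hx
    rw [mem_P] at hx
    obtain ⟨⟨a, b⟩, ⟨c, d⟩, e, f⟩ := hx
    exact ⟨⟨by linarith, b⟩, by nlinarith⟩
  have hsub4 : Q0 ⊆ P 4 := by
    rintro x ⟨⟨a, b⟩, c⟩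
    rw [mem_P]
    refine ⟨⟨by linarith, b⟩, ⟨?_, ?_⟩, ?_, ?_⟩ <;> nlinarith [sq_nonneg (x 1), sq_nonneg (x 2)]
  have hint : IntegrableOn (fun x => (u x) ^ 2) Q0 :=
    (intP (by fun_prop) 4).mono_set hsub4
  have hle : ∫ x in P (7 / 5), (u x) ^ 2 ≤ ∫ x in Q0, (u x) ^ 2 :=
    setIntegral_mono_set hint (Eventually.of_forall fun x => sq_nonneg _)
      (Eventually.of_forall hsub)
  have hfin : volume Q0 ≠ ⊤ :=
    ((measure_mono hsub4).trans_lt (P_compact 4).measure_lt_top).ne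
  rw [setAverage_eq, smul_eq_mul]
  rcases eq_or_ne (volume.real Q0) 0 with h | h
  · have : volume Q0 = 0 := by
      rw [Measure.real, ENNReal.toReal_eq_zero_iff] at h
      exact h.resolve_right hfin
    rw [Measure.restrict_eq_zero.2 this] at hle
    simpa [h] using hle
  · rwa [mul_inv_cancel_left₀ h]

/-! ### Part 9: assembly -/

theorem Xm_contDiff (c : Fin 2 → ℝ) (l1 l2 : ℝ) : ContDiff ℝ (⊤ : ℕ∞) (Xm c l1 l2) := by
  have h : ∀ i : Fin 3, ContDiff ℝ (⊤ : ℕ∞) (fun y : Fin 3 → ℝ => y i) := fun i =>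
    contDiff_apply ℝ ℝ i
  rw [contDiff_pi]
  intro i
  fin_cases i
  · exact contDiff_const.add (contDiff_const.mul (h 1))
  · exact contDiff_const.add (contDiff_const.mul (h 2))

theorem sol_u {κ K R t₀ ρ : ℝ} (hκ : 0 < κ) (hρ : κ * ρ ^ 2 = K) (c : Fin 2 → ℝ)
    (h0 : 0 ≤ t₀ - (2 * R) ^ 2 / κ) (h1 : t₀ ≤ 1) {θ : ℝ → (Fin 2 → ℝ) → ℝ}
    (hθ : ContDiff ℝ (⊤ : ℕ∞) (fun p : ℝ × (Fin 2 → ℝ) => θ p.1 p.2))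
    (hpde : ∀ t ∈ Set.Icc (0:ℝ) 1, ∀ x,
          deriv (fun s => θ s x) t = K * pd (pd (θ t) 0) 0 x + κ * pd (pd (θ t) 1) 1 x) :
    Sol (fun y => θ (t₀ + R ^ 2 / κ * y 0) (Xm c (R * ρ) R y)) := by
  have ht : ContDiff ℝ (⊤ : ℕ∞) (fun y : Fin 3 → ℝ => t₀ + R ^ 2 / κ * y 0) :=
    contDiff_const.add (contDiff_const.mul (contDiff_apply ℝ ℝ (0 : Fin 3)))
  have hu : ContDiff ℝ (⊤ : ℕ∞)
      (fun y : Fin 3 → ℝ => θ (t₀ + R ^ 2 / κ * y 0) (Xm c (R * ρ) R y)) :=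
    hθ.comp (ht.prodMk (Xm_contDiff c (R * ρ) R))
  have hθt : ∀ t, ContDiff ℝ (⊤ : ℕ∞) (θ t) := fun t =>
    hθ.comp (contDiff_const.prodMk contDiff_id)
  have hθx : ∀ x, ContDiff ℝ (⊤ : ℕ∞) (fun t => θ t x) := fun x =>
    hθ.comp (contDiff_id.prodMk contDiff_const)
  refine ⟨hu, fun x hx => ?_⟩
  set u : (Fin 3 → ℝ) → ℝ := fun y => θ (t₀ + R ^ 2 / κ * y 0) (Xm c (R * ρ) R y) with hudef
  have e1 : ∀ x, pd u 1 x = R * ρ * pd (θ (t₀ + R ^ 2 / κ * x 0)) 0 (Xm c (R * ρ) R x) := by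
    intro x
    rw [pd_eq_deriv 1 (smooth_diff hu x)]
    have := (Xm_slice1 (c := c) (l1 := R * ρ) (l2 := R) (x := x) (τ := x 1)
      (smooth_diff (hθt (t₀ + R ^ 2 / κ * x 0)) _)).deriv
    simpa [hudef] using this
  have e2 : ∀ x, pd u 2 x = R * pd (θ (t₀ + R ^ 2 / κ * x 0)) 1 (Xm c (R * ρ) R x) := by
    intro x
    rw [pd_eq_deriv 2 (smooth_diff hu x)]
    have := (Xm_slice2 (c := c) (l1 := R * ρ) (l2 := R) (x := x) (τ := x 2)
      (smooth_diff (hθt (t₀ + R ^ 2 / κ * x 0)) _)).deriv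
    simpa [hudef] using this
  have e11 : pd (pd u 1) 1 x = R * ρ * (R * ρ * pd (pd (θ (t₀ + R ^ 2 / κ * x 0)) 0) 0
      (Xm c (R * ρ) R x)) := by
    rw [pd_eq_deriv 1 (smooth_diff (pd_contDiff hu 1) x)]
    have := ((Xm_slice1 (c := c) (l1 := R * ρ) (l2 := R) (x := x) (τ := x 1)
      (smooth_diff (pd_contDiff (hθt (t₀ + R ^ 2 / κ * x 0)) 0) _)).const_mul (R * ρ)).deriv
    simpa [e1] using this
  have e22 : pd (pd u 2) 2 x = R * (R * pd (pd (θ (t₀ + R ^ 2 / κ * x 0)) 1) 1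
      (Xm c (R * ρ) R x)) := by
    rw [pd_eq_deriv 2 (smooth_diff (pd_contDiff hu 2) x)]
    have := ((Xm_slice2 (c := c) (l1 := R * ρ) (l2 := R) (x := x) (τ := x 2)
      (smooth_diff (pd_contDiff (hθt (t₀ + R ^ 2 / κ * x 0)) 1) _)).const_mul R).deriv
    simpa [e2] using this
  have e0 : pd u 0 x = deriv (fun s => θ s (Xm c (R * ρ) R x)) (t₀ + R ^ 2 / κ * x 0)
      * (R ^ 2 / κ) := by
    rw [pd_eq_deriv 0 (smooth_diff hu x)]
    have hl : HasDerivAt (fun τ : ℝ => t₀ + R ^ 2 / κ * τ) (R ^ 2 / κ) (x 0) := by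
      simpa using ((hasDerivAt_id (x 0)).const_mul (R ^ 2 / κ)).const_add t₀
    have hd : HasDerivAt (fun s => θ s (Xm c (R * ρ) R x)) _ (t₀ + R ^ 2 / κ * x 0) :=
      (((hθx (Xm c (R * ρ) R x)).differentiable (by simp)) (t₀ + R ^ 2 / κ * x 0)).hasDerivAt
    have := (HasDerivAt.comp (x 0) hd hl).deriv
    rw [← this]
    congr 1
  have hR : (2 * R) ^ 2 / κ = 4 * (R ^ 2 / κ) := by ring
  have hRk : 0 ≤ R ^ 2 / κ := by positivity
  rw [e0, e11, e22, hpde _ ⟨?_, ?_⟩]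
  · rw [← hρ]; field_simp
  · rw [hR] at h0
    nlinarith [hx.1]
  · nlinarith [hx.2]

theorem pde_V {κ a ε R t₀ ρ β : ℝ} (hκ : 0 < κ) (hε : 0 < ε) (hR : 0 < R)
    (hK : 0 < κ + a ^ 2 * ε ^ 4 / (2 * κ))
    (hρ : κ * ρ ^ 2 = κ + a ^ 2 * ε ^ 4 / (2 * κ)) (hβ : β * ρ = a * ε ^ 2 / κ)
    (hq : (1 - β ^ 2 / 2) * ρ ^ 2 = 1) (c : Fin 2 → ℝ) {θε : ℝ → (Fin 2 → ℝ) → ℝ}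
    (hV : ∀ t ∈ Set.Ioc (t₀ - R ^ 2 / κ) t₀,
          ContDiffOn ℝ 2 (θε t) (interior (ellipsoid κ a ε c R)) ∧
          ∀ x ∈ interior (ellipsoid κ a ε c R),
            DifferentiableAt ℝ (fun s => θε s x) t ∧
            deriv (fun s => θε s x) t
              = ∑ i, pd (fun y => ∑ j, aEps κ a ε y i j * pd (θε t) j y) i x)
    {V : (Fin 3 → ℝ) → ℝ} (hVd : ∀ y, V y = θε (t₀ + R ^ 2 / κ * y 0) (Xm c (R * ρ) R y))
    (x : Fin 3 → ℝ) (hx : x ∈ Kc) (hx0 : -1 < x 0) (hx1 : x 1 ^ 2 + x 2 ^ 2 < 1) :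
    ∃ (A0 A11 A22 : ℝ) (V1 V2 : ℝ → ℝ),
      HasDerivAt (fun τ => V (Function.update x 0 τ)) A0 (x 0) ∧
      (∀ᶠ τ in 𝓝 (x 1), HasDerivAt (fun τ => V (Function.update x 1 τ)) (V1 τ) τ) ∧
      HasDerivAt V1 A11 (x 1) ∧
      (∀ᶠ τ in 𝓝 (x 2), HasDerivAt (fun τ => V (Function.update x 2 τ)) (V2 τ) τ) ∧
      HasDerivAt V2 A22 (x 2) ∧ A0 = (1 - β ^ 2 / 2) * A11 + A22
        + 2 * π * β / (ε / R) * Real.cos (2 * π / (ε / R) * x 2 + 2 * π * c 1 / ε) * V1 (x 1) := by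
  have hRk : 0 < R ^ 2 / κ := by positivity
  have htm : t₀ + R ^ 2 / κ * x 0 ∈ Set.Ioc (t₀ - R ^ 2 / κ) t₀ := by
    constructor
    · nlinarith
    · nlinarith [hx.1.2]
  obtain ⟨hC, hE⟩ := hV _ htm
  set t := t₀ + R ^ 2 / κ * x 0 with ht
  have hXi : ∀ y : Fin 3 → ℝ, y 1 ^ 2 + y 2 ^ 2 < 1 →
      Xm c (R * ρ) R y ∈ interior (ellipsoid κ a ε c R) := fun y hy =>
    (Xm_interior hκ hK hR hρ y).2 hy
  have hCat : ∀ y : Fin 3 → ℝ, y 1 ^ 2 + y 2 ^ 2 < 1 →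
      ContDiffAt ℝ 2 (θε t) (Xm c (R * ρ) R y) := fun y hy =>
    hC.contDiffAt (isOpen_interior.mem_nhds (hXi y hy))
  have hd1 : ∀ y : Fin 3 → ℝ, y 1 ^ 2 + y 2 ^ 2 < 1 →
      DifferentiableAt ℝ (θε t) (Xm c (R * ρ) R y) := fun y hy =>
    (hCat y hy).differentiableAt (by norm_num)
  have hd2 : ∀ i, DifferentiableAt ℝ (pd (θε t) i) (Xm c (R * ρ) R x) := fun i => by
    have h := ((hCat x hx1).fderiv_right (m := 1) (by norm_num)).differentiableAt (by norm_num)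
    exact h.clm_apply (differentiableAt_const _)
  obtain ⟨hD, hPDE⟩ := hE _ (hXi x hx1)
  refine ⟨deriv (fun s => θε s (Xm c (R * ρ) R x)) t * (R ^ 2 / κ),
    R * ρ * (R * ρ * pd (pd (θε t) 0) 0 (Xm c (R * ρ) R x)),
    R * (R * pd (pd (θε t) 1) 1 (Xm c (R * ρ) R x)),
    fun τ => R * ρ * pd (θε t) 0 (Xm c (R * ρ) R (Function.update x 1 τ)),
    fun τ => R * pd (θε t) 1 (Xm c (R * ρ) R (Function.update x 2 τ)), ?_, ?_, ?_, ?_, ?_, ?_⟩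
  · have hl : HasDerivAt (fun τ : ℝ => t₀ + R ^ 2 / κ * τ) (R ^ 2 / κ) (x 0) := by
      simpa using ((hasDerivAt_id (x 0)).const_mul (R ^ 2 / κ)).const_add t₀
    have := HasDerivAt.comp (x 0) (h₂ := fun s => θε s (Xm c (R * ρ) R x)) hD.hasDerivAt hl
    refine this.congr_of_eventuallyEq (Eventually.of_forall fun τ => ?_)
    simp [hVd, Xm]
  · have : ∀ᶠ τ in 𝓝 (x 1), τ ^ 2 + x 2 ^ 2 < 1 :=
      (by fun_prop : Continuous fun τ : ℝ => τ ^ 2 + x 2 ^ 2).continuousAt.eventually_lt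
        continuousAt_const hx1
    filter_upwards [this] with τ hτ
    have := Xm_slice1 (hd1 (Function.update x 1 τ) (by simpa using hτ))
    simpa [hVd, ht] using this
  · have := (Xm_slice1 (c := c) (l1 := R * ρ) (l2 := R) (x := x) (τ := x 1)
      (by simpa using hd2 0)).const_mul (R * ρ)
    simpa using this
  · have : ∀ᶠ τ in 𝓝 (x 2), x 1 ^ 2 + τ ^ 2 < 1 :=
      (by fun_prop : Continuous fun τ : ℝ => x 1 ^ 2 + τ ^ 2).continuousAt.eventually_lt
        continuousAt_const hx1
    filter_upwards [this] with τ hτ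
    have := Xm_slice2 (hd1 (Function.update x 2 τ) (by simpa using hτ))
    simpa [hVd, ht] using this
  · have := (Xm_slice2 (c := c) (l1 := R * ρ) (l2 := R) (x := x) (τ := x 2)
      (by simpa using hd2 1)).const_mul R
    simpa using this
  · rw [hPDE, pde_expand (hCat x hx1)]
    beta_reduce
    rw [Function.update_eq_self]
    have harg : 2 * π * (Xm c (R * ρ) R x) 1 / ε = 2 * π / (ε / R) * x 2 + 2 * π * c 1 / ε := by
      simp [Xm]; field_simp; ring
    rw [harg]
    generalize Real.cos (2 * π / (ε / R) * x 2 + 2 * π * c 1 / ε) = cs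
    generalize pd (pd (θε t) 0) 0 (Xm c (R * ρ) R x) = f00
    generalize pd (pd (θε t) 1) 1 (Xm c (R * ρ) R x) = f11
    generalize pd (θε t) 0 (Xm c (R * ρ) R x) = f0
    have r1 : (1 - β ^ 2 / 2) * (R * ρ * (R * ρ * f00)) = R ^ 2 * f00 := by
      linear_combination (R ^ 2 * f00) * hq
    have r2 : 2 * π * β / (ε / R) * cs * (R * ρ * f0)
        = a * ε ^ 2 / κ * (2 * π / (ε / R)) * cs * R * f0 := by
      rw [← hβ]; ring
    rw [r1, r2]
    field_simp

theorem Q0_iff {k S t₀ : ℝ} (hk : 0 < k) (hS : 0 < S) (y : Fin 3 → ℝ) :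
    ((t₀ - 4 * k < t₀ + k * y 0 ∧ t₀ + k * y 0 ≤ t₀) ∧
      S * (y 1 ^ 2 + y 2 ^ 2) ≤ 4 * S) ↔ y ∈ Q0 := by
  constructor
  · rintro ⟨⟨h1, h2⟩, h3⟩
    refine ⟨⟨?_, ?_⟩, ?_⟩
    · by_contra! h; nlinarith
    · by_contra! h; nlinarith
    · by_contra! h; nlinarith
  · rintro ⟨⟨h1, h2⟩, h3⟩
    refine ⟨⟨?_, ?_⟩, ?_⟩ <;> nlinarith

set_option maxHeartbeats 1000000
/-- **Quantitative homogenization for a shear flow (Taylor diffusion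
estimate).** There is a universal constant `C` such that: if `θ` solves the
homogenized equation `∂_t θ = div(𝐚̄∇θ)` on `[0,1] × T²`, `Q_{2R}(t₀,x₀) ⊆
[0,1] × T²`, and `θ_ε` solves `∂_t θ_ε = div(𝐚^ε∇θ_ε)` in `Q_R(t₀,x₀)` with
`θ_ε = θ` on `∂_par Q_R`, then
`sup_t (⨍_{x₀+E_R} |θ_ε − θ|²)^{1/2} ≤ C(1 + aε²/κ)(ε/R)(⨍_{Q_{2R}}|θ|²)^{1/2}`. -/
theorem quantitative_homogenization_shear :
    ∃ C : ℝ, 0 < C ∧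
      ∀ (κ a ε : ℝ), 0 < κ → 0 < a → 0 < ε →
      ∀ (t₀ : ℝ) (x₀ : Fin 2 → ℝ) (R : ℝ), 0 < R →
      0 ≤ t₀ - (2 * R) ^ 2 / κ → t₀ ≤ 1 →
      ∀ θ : ℝ → (Fin 2 → ℝ) → ℝ,
        ContDiff ℝ (⊤ : ℕ∞) (fun p : ℝ × (Fin 2 → ℝ) => θ p.1 p.2) →
        (∀ t, SpacePeriodic (θ t)) →
        (∀ t ∈ Set.Icc (0:ℝ) 1, ∀ x,
          deriv (fun s => θ s x) t
            = (κ + a ^ 2 * ε ^ 4 / (2 * κ)) * pd (pd (θ t) 0) 0 x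
              + κ * pd (pd (θ t) 1) 1 x) →
      ∀ θε : ℝ → (Fin 2 → ℝ) → ℝ,
        ContinuousOn (fun p : ℝ × (Fin 2 → ℝ) => θε p.1 p.2)
          (Set.Icc (t₀ - R ^ 2 / κ) t₀ ×ˢ ellipsoid κ a ε x₀ R) →
        (∀ t ∈ Set.Ioc (t₀ - R ^ 2 / κ) t₀,
          ContDiffOn ℝ 2 (θε t) (interior (ellipsoid κ a ε x₀ R)) ∧
          ∀ x ∈ interior (ellipsoid κ a ε x₀ R),
            DifferentiableAt ℝ (fun s => θε s x) t ∧
            deriv (fun s => θε s x) t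
              = ∑ i, pd (fun y => ∑ j, aEps κ a ε y i j * pd (θε t) j y) i x) →
        (∀ p ∈ pBdry κ a ε t₀ x₀ R, θε p.1 p.2 = θ p.1 p.2) →
      ∀ t ∈ Set.Ioc (t₀ - R ^ 2 / κ) t₀,
        Real.sqrt (⨍ x in ellipsoid κ a ε x₀ R, (θε t x - θ t x) ^ 2)
          ≤ C * (1 + a * ε ^ 2 / κ) * (ε / R)
            * Real.sqrt (⨍ p in pCyl κ a ε t₀ x₀ (2 * R), (θ p.1 p.2) ^ 2) := by
  obtain ⟨C, hC, H⟩ := rescaled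
  refine ⟨C * (√(volume.real Q0) + 1), by positivity, ?_⟩
  intro κ a ε hκ ha hε t₀ x₀ R hR ht0 ht1 θ hθ _ hpde θε hcont hV hbd t ht
  set K := κ + a ^ 2 * ε ^ 4 / (2 * κ) with hKdef
  have hK : 0 < K := by positivity
  set ρ := √(K / κ) with hρdef
  have hρ0 : 0 < ρ := Real.sqrt_pos.2 (by positivity)
  have hρ2 : ρ ^ 2 = K / κ := Real.sq_sqrt (by positivity)
  have hρ : κ * ρ ^ 2 = K := by rw [hρ2]; field_simp
  set β := a * ε ^ 2 / κ / ρ with hβdef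
  have hβ : β * ρ = a * ε ^ 2 / κ := by rw [hβdef]; field_simp
  have hβ0 : 0 ≤ β := by positivity
  have hq : (1 - β ^ 2 / 2) * ρ ^ 2 = 1 := by
    have : (1 - β ^ 2 / 2) * ρ ^ 2 = ρ ^ 2 - (β * ρ) ^ 2 / 2 := by ring
    rw [this, hβ, hρ2, hKdef]
    field_simp
    ring
  have hβ2 : β ^ 2 ≤ 2 := by
    by_contra! h
    have : 0 < ρ ^ 2 := by positivity
    nlinarith
  have hRk : 0 < R ^ 2 / κ := by positivity
  have hu := sol_u hκ hρ x₀ ht0 ht1 hθ hpde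
  set u : (Fin 3 → ℝ) → ℝ := fun y => θ (t₀ + R ^ 2 / κ * y 0) (Xm x₀ (R * ρ) R y) with hudef
  have hmem : ∀ y ∈ Kc, (t₀ + R ^ 2 / κ * y 0, Xm x₀ (R * ρ) R y) ∈
      Set.Icc (t₀ - R ^ 2 / κ) t₀ ×ˢ ellipsoid κ a ε x₀ R := by
    rintro y ⟨⟨h1, h2⟩, h3⟩
    refine ⟨⟨?_, ?_⟩, ?_⟩
    · show t₀ - R ^ 2 / κ ≤ t₀ + R ^ 2 / κ * y 0
      nlinarith
    · show t₀ + R ^ 2 / κ * y 0 ≤ t₀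
      nlinarith
    · refine (Xm_mem hκ hK hρ y).2 ?_
      nlinarith [sq_nonneg R]
  have hVc : ContinuousOn (fun y : Fin 3 → ℝ => θε (t₀ + R ^ 2 / κ * y 0) (Xm x₀ (R * ρ) R y)) Kc := by
    have hc : Continuous fun y : Fin 3 → ℝ => (t₀ + R ^ 2 / κ * y 0, Xm x₀ (R * ρ) R y) :=
      (by fun_prop : Continuous fun y : Fin 3 → ℝ => t₀ + R ^ 2 / κ * y 0).prodMk
        (Xm_contDiff x₀ (R * ρ) R).continuous
    exact hcont.comp hc.continuousOn hmem
  have main := H u hu β (ε / R) (2 * π * x₀ 1 / ε) hβ0 hβ2 (by positivity) _ hVc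
    (pde_V hκ hε hR hK hρ hβ hq x₀ hV (fun _ => rfl))
    (by
      intro y hy hor
      refine hbd (t₀ + R ^ 2 / κ * y 0, Xm x₀ (R * ρ) R y) ⟨hmem y hy, ?_⟩
      rintro ⟨hin1, hin2⟩
      rcases hor with h | h
      · have h5 : t₀ - R ^ 2 / κ < t₀ + R ^ 2 / κ * y 0 := hin1.1
        rw [h] at h5
        linarith
      · have h5 := (Xm_interior hκ hK hR hρ y).1 hin2
        linarith)
  set M := √(∫ x in P (7 / 5), (u x) ^ 2) with hM
  have hM0 : 0 ≤ M := Real.sqrt_nonneg _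
  have hL : √(⨍ x in ellipsoid κ a ε x₀ R, (θε t x - θ t x) ^ 2) ≤ C * (ε / R) * M := by
    refine sqrt_avg_le (f := fun x => θε t x - θ t x) (by positivity) fun x hx => ?_
    have hX := Xm_surj (c := x₀) hR.ne' hρ0.ne' x ((t - t₀) / (R ^ 2 / κ))
    set y : Fin 3 → ℝ := ![(t - t₀) / (R ^ 2 / κ), (x 0 - x₀ 0) / (R * ρ), (x 1 - x₀ 1) / R]
      with hy
    have hy0 : y 0 = (t - t₀) / (R ^ 2 / κ) := rfl
    have hty : t₀ + R ^ 2 / κ * y 0 = t := by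
      rw [hy0]; field_simp; ring
    have hyK : y ∈ Kc := by
      refine ⟨⟨?_, ?_⟩, ?_⟩
      · rw [hy0, le_div_iff₀ hRk]; linarith [ht.1]
      · rw [hy0]; exact div_nonpos_of_nonpos_of_nonneg (by linarith [ht.2]) hRk.le
      · have h6 : R ^ 2 * (y 1 ^ 2 + y 2 ^ 2) ≤ R ^ 2 :=
          (Xm_mem hκ hK hρ y).1 (by rw [hX]; exact hx)
        have : 0 < R ^ 2 := by positivity
        nlinarith
    have h7 := main y hyK
    simp only [hudef] at h7
    rw [hty, hX] at h7
    exact h7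
  have hMle : M ≤ √(volume.real Q0)
      * √(⨍ p in pCyl κ a ε t₀ x₀ (2 * R), (θ p.1 p.2) ^ 2) := by
    rw [← Real.sqrt_mul measureReal_nonneg, hM]
    apply Real.sqrt_le_sqrt
    rw [avg_change (t₀ := t₀) hRk.ne' (mul_ne_zero hR.ne' hρ0.ne') hR.ne' x₀
      (fun p => (θ p.1 p.2) ^ 2)]
    have hpre : (fun y : Fin 3 → ℝ => (t₀ + R ^ 2 / κ * y 0, Xm x₀ (R * ρ) R y)) ⁻¹'
        pCyl κ a ε t₀ x₀ (2 * R) = Q0 := by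
      ext y
      have hR2 : 0 < R ^ 2 := by positivity
      have q1 : (2 * R) ^ 2 / κ = 4 * (R ^ 2 / κ) := by ring
      have q2 : (2 * R) ^ 2 = 4 * R ^ 2 := by ring
      rw [Set.mem_preimage, pCyl, Set.mem_prod, Set.mem_Ioc, q1, Xm_mem hκ hK hρ, q2]
      exact Q0_iff hRk hR2 y
    rw [hpre]
    exact Q0_int_le hu.1.continuous
  set N := √(⨍ p in pCyl κ a ε t₀ x₀ (2 * R), (θ p.1 p.2) ^ 2) with hN
  have hN0 : 0 ≤ N := Real.sqrt_nonneg _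
  have hv := Real.sqrt_nonneg (volume.real Q0)
  have hb : 0 ≤ a * ε ^ 2 / κ := by positivity
  have hδ : 0 < ε / R := by positivity
  calc _ ≤ C * (ε / R) * M := hL
    _ ≤ C * (ε / R) * ((√(volume.real Q0) + 1) * N) := by gcongr; nlinarith
    _ = C * (√(volume.real Q0) + 1) * 1 * (ε / R) * N := by ring
    _ ≤ C * (√(volume.real Q0) + 1) * (1 + a * ε ^ 2 / κ) * (ε / R) * N := by
      gcongr; linarith
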